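/- arXiv:1812.05580 — 3 statements merged into one kernel-verified Lean document; each statement's English description precedes it below -/
import Mathlib

section
/- For every complex number q with |q| < 1, the sum over all nonnegative integers j of q^(2j^2) · (-q^(2j+1); q)_∞ / ((q^2; q^2)_j) equals the product over all positive integers j with j not congruent to 0, 3, or -3 modulo 7 of 1/(1 - q^j). -/
/-- The finite q-Pochhammer symbol `(a; q)_n = ∏_{h=0}^{n-1} (1 - a q^h)`. -/
noncomputable def qPoch (a q : ℂ) (n : ℕ) : ℂ := ∏ h ∈ Finset.range n, (1 - a * q ^ h)

/-- The infinite q-Pochhammer symbol `(a; q)_∞ = ∏_{h=0}^{∞} (1 - a q^h)`. -/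
noncomputable def qPochInf (a q : ℂ) : ℂ := ∏' h : ℕ, (1 - a * q ^ h)

namespace RS
open Filter Topology

/-- Reciprocal q-factorial `1/(Q;Q)_n`, extended by zero to negative integers. -/
noncomputable def e (Q : ℂ) (n : ℤ) : ℂ := if n < 0 then 0 else (qPoch Q Q n.toNat)⁻¹

lemma one_sub_pow_ne {Q : ℂ} (hQ : ‖Q‖ < 1) (n : ℕ) : 1 - Q ^ (n + 1) ≠ 0 := by
  intro h
  have h1 : Q ^ (n + 1) = 1 := (sub_eq_zero.mp h).symm
  have h2 : ‖Q‖ ^ (n + 1) = 1 := by rw [← norm_pow, h1, norm_one]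
  have h3 := pow_lt_one₀ (norm_nonneg Q) hQ (Nat.succ_ne_zero n)
  rw [Nat.succ_eq_add_one] at h3
  linarith

lemma qPoch_ne {Q : ℂ} (hQ : ‖Q‖ < 1) (n : ℕ) : qPoch Q Q n ≠ 0 := by
  unfold qPoch
  refine Finset.prod_ne_zero_iff.mpr fun h _ => ?_
  have := one_sub_pow_ne hQ h
  rwa [pow_succ'] at this

lemma qPoch_succ (a q : ℂ) (n : ℕ) : qPoch a q (n + 1) = qPoch a q n * (1 - a * q ^ n) := by
  unfold qPoch; rw [Finset.prod_range_succ]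

lemma e_neg (Q : ℂ) {n : ℤ} (h : n < 0) : e Q n = 0 := by simp [e, h]

lemma e_nat (Q : ℂ) (n : ℕ) : e Q n = (qPoch Q Q n)⁻¹ := by simp [e]

lemma e_zero (Q : ℂ) : e Q 0 = 1 := by simp [e, qPoch]

lemma e_rec {Q : ℂ} (hQ : ‖Q‖ < 1) (n : ℤ) : (1 - Q ^ n) * e Q n = e Q (n - 1) := by
  rcases lt_trichotomy n 0 with h | h | h
  · rw [e_neg Q h, e_neg Q (by omega), mul_zero]
  · subst h; rw [e_neg Q (by omega : (0 : ℤ) - 1 < 0)]; simp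
  · obtain ⟨m, rfl⟩ : ∃ m : ℕ, n = ((m + 1 : ℕ) : ℤ) := ⟨(n - 1).toNat, by omega⟩
    have h1 : ((m + 1 : ℕ) : ℤ) - 1 = (m : ℕ) := by push_cast; ring
    rw [h1, e_nat, e_nat, qPoch_succ, zpow_natCast, ← pow_succ']
    have := one_sub_pow_ne hQ m
    have := qPoch_ne hQ m
    field_simp

lemma pascal {Q : ℂ} (hQ0 : Q ≠ 0) (hQ : ‖Q‖ < 1) (a b : ℤ) :
    (1 - Q ^ (a + b)) * (e Q a * e Q b) = e Q (a - 1) * e Q b + Q ^ a * (e Q a * e Q (b - 1)) := by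
  rw [← e_rec hQ a, ← e_rec hQ b, zpow_add₀ hQ0]; ring

lemma summ1 (f : ℤ → ℂ) (N : ℤ) (h : ∀ r, f r ≠ 0 → -N ≤ r ∧ r ≤ N) : Summable f := by
  refine summable_of_ne_finset_zero (s := Finset.Icc (-N) N) fun b hb => ?_
  by_contra h1
  exact hb (Finset.mem_Icc.mpr (h b h1))

/-- support tactic helper -/
lemma e_ne {Q : ℂ} {n : ℤ} (h : e Q n ≠ 0) : 0 ≤ n := by
  by_contra h1
  exact h (e_neg Q (by omega))

/-- Finite Bailey step. -/
lemma bailey_aux {Q : ℂ} (hQ0 : Q ≠ 0) (hQ : ‖Q‖ < 1) (M : ℕ) : ∀ s : ℤ,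
    ∑' i : ℤ, Q ^ (i ^ 2 + s * i) * (e Q (M - i) * e Q i * e Q (i + s)) = e Q M * e Q (M + s) := by
  have hs : ∀ (M : ℕ) (s : ℤ), Summable fun i : ℤ =>
      Q ^ (i ^ 2 + s * i) * (e Q (M - i) * e Q i * e Q (i + s)) := by
    intro M s
    refine summ1 _ M fun r hr => ?_
    simp only [ne_eq, mul_eq_zero, not_or] at hr
    have := e_ne hr.2.1.1
    have := e_ne hr.2.1.2
    omega
  induction M with
  | zero =>
    intro s
    rw [tsum_eq_single 0]
    · simp [e_zero]
    · intro i hi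
      rcases lt_or_gt_of_ne hi with h | h
      · rw [e_neg Q h]; simp
      · rw [e_neg Q (by push_cast; omega : ((0 : ℕ) : ℤ) - i < 0)]; simp
  | succ M ih =>
    intro s
    have hM : (1 - Q ^ ((M : ℤ) + 1)) ≠ 0 := by
      have := one_sub_pow_ne hQ M
      exact_mod_cast this
    have key : (1 - Q ^ ((M : ℤ) + 1)) * ∑' i : ℤ, Q ^ (i ^ 2 + s * i) *
        (e Q ((M + 1 : ℕ) - i) * e Q i * e Q (i + s)) =
        e Q M * e Q (M + s) + Q ^ ((M : ℤ) + 1 + s) * (e Q M * e Q (M + (s + 1))) := by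
      rw [← ih s, ← ih (s + 1), ← tsum_mul_left, ← tsum_mul_left]
      rw [← (Equiv.subRight (1 : ℤ)).tsum_eq (fun i : ℤ => Q ^ ((M : ℤ) + 1 + s) *
        (Q ^ (i ^ 2 + (s + 1) * i) * (e Q (M - i) * e Q i * e Q (i + (s + 1)))))]
      refine Eq.trans ?_ (Summable.tsum_add (hs M s) (((Equiv.subRight (1 : ℤ)).summable_iff
        (f := fun i : ℤ => Q ^ ((M : ℤ) + 1 + s) *
        (Q ^ (i ^ 2 + (s + 1) * i) * (e Q (M - i) * e Q i * e Q (i + (s + 1)))))).mpr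
          ((hs M (s + 1)).mul_left _)))
      congr 1
      ext i
      have hp := pascal hQ0 hQ ((M : ℤ) + 1 - i) i
      rw [show (M : ℤ) + 1 - i + i = M + 1 by ring, show (M : ℤ) + 1 - i - 1 = M - i by ring] at hp
      simp only [Equiv.subRight_apply]
      push_cast
      rw [show (M : ℤ) - (i - 1) = M + 1 - i by ring, show i - 1 + (s + 1) = i + s by ring]
      have hx : Q ^ ((M : ℤ) + 1 + s) * Q ^ ((i - 1) ^ 2 + (s + 1) * (i - 1)) =
          Q ^ (i ^ 2 + s * i) * Q ^ ((M : ℤ) + 1 - i) := by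
        rw [← zpow_add₀ hQ0, ← zpow_add₀ hQ0]; congr 1; ring
      linear_combination (Q ^ (i ^ 2 + s * i) * e Q (i + s)) * hp -
        (e Q ((M : ℤ) + 1 - i) * e Q (i - 1) * e Q (i + s)) * hx
    apply mul_left_cancel₀ hM
    rw [key]
    have h1 := e_rec hQ ((M : ℤ) + 1)
    have h2 := e_rec hQ ((M : ℤ) + s + 1)
    rw [show (M : ℤ) + 1 - 1 = M by ring] at h1
    rw [show (M : ℤ) + s + 1 - 1 = M + s by ring] at h2
    push_cast
    rw [show (M : ℤ) + 1 + s = M + s + 1 by ring, show (M : ℤ) + (s + 1) = M + s + 1 by ring,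
      ← h2, ← h1]
    ring

lemma bailey {Q : ℂ} (hQ0 : Q ≠ 0) (hQ : ‖Q‖ < 1) (L : ℕ) (r : ℤ) :
    ∑' j : ℤ, Q ^ (j ^ 2) * e Q (L - j) * (e Q (j - r) * e Q (j + r)) =
      Q ^ (r ^ 2) * (e Q (L - r) * e Q (L + r)) := by
  by_cases h : (L : ℤ) - r < 0
  · rw [e_neg Q h]
    rw [show (fun j : ℤ => Q ^ (j ^ 2) * e Q (L - j) * (e Q (j - r) * e Q (j + r))) = 0 from ?_]
    · rw [zero_mul, mul_zero]; exact tsum_zero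
    · ext j
      by_cases h1 : j - r < 0
      · rw [e_neg Q h1]; simp
      · rw [e_neg Q (by omega : (L : ℤ) - j < 0)]; simp
  · obtain ⟨M, hM⟩ : ∃ M : ℕ, (L : ℤ) - r = M := ⟨((L : ℤ) - r).toNat, by omega⟩
    have := bailey_aux hQ0 hQ M (2 * r)
    rw [hM, show (L : ℤ) + r = M + 2 * r by omega, ← this, ← tsum_mul_left,
      ← (Equiv.addRight r).tsum_eq]
    congr 1
    ext i
    simp only [Equiv.coe_addRight]
    rw [show (L : ℤ) - (i + r) = M - i by omega, show i + r - r = i by ring,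
      show i + r + r = i + 2 * r by ring, show (i + r) ^ 2 = r ^ 2 + (i ^ 2 + 2 * r * i) by ring,
      zpow_add₀ hQ0]
    ring

/-- pentagonal exponent -/
def pe (r : ℤ) : ℤ := r * (3 * r - 1) / 2

lemma two_pe (r : ℤ) : 2 * pe r = r * (3 * r - 1) := by
  unfold pe
  have : (2 : ℤ) ∣ r * (3 * r - 1) := by
    rcases Int.even_or_odd' r with ⟨k, rfl | rfl⟩
    · exact ⟨k * (3 * (2 * k) - 1), by ring⟩
    · exact ⟨(2 * k + 1) * (3 * k + 1), by ring⟩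
  omega

noncomputable def c (q : ℂ) (r : ℤ) : ℂ := (-1) ^ r * q ^ pe r

lemma neg_one_zpow_add_one (r : ℤ) : (-1 : ℂ) ^ (r + 1) = -(-1) ^ r := by
  rw [zpow_add₀ (by norm_num)]; simp

lemma summ_c (f : ℤ → ℂ) (Q : ℂ) (a b : ℤ) : Summable fun r => f r * (e Q (a - r) * e Q (b + r)) := by
  refine summ1 _ (|a| + |b|) fun r hr => ?_
  simp only [ne_eq, mul_eq_zero, not_or] at hr
  have := e_ne hr.2.1
  have := e_ne hr.2.2
  have := le_abs_self a
  have := neg_abs_le a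
  have := le_abs_self b
  have := neg_abs_le b
  have := abs_nonneg a
  have := abs_nonneg b
  omega

lemma finite_pent {q : ℂ} (hq0 : q ≠ 0) (hQ : ‖q ^ 2‖ < 1) (n : ℕ) :
    ∑' r : ℤ, c q r * (e (q ^ 2) (n - r) * e (q ^ 2) (n + r)) =
      qPoch q (q ^ 2) n * e (q ^ 2) (2 * n) := by
  have hQ0 : q ^ 2 ≠ 0 := pow_ne_zero 2 hq0
  have hz : ∀ k : ℤ, (q ^ 2) ^ k = q ^ (2 * k) := fun k => by
    rw [zpow_mul]; norm_cast
  induction n with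
  | zero =>
    rw [tsum_eq_single 0]
    · simp [e_zero, c, pe, qPoch]
    · intro i hi
      rcases lt_or_gt_of_ne hi with h | h
      · rw [e_neg _ (by push_cast; omega : ((0 : ℕ) : ℤ) + i < 0)]; simp
      · rw [e_neg _ (by push_cast; omega : ((0 : ℕ) : ℤ) - i < 0)]; simp
  | succ n ih =>
    set Q := q ^ 2 with hQdef
    -- V = 0
    have hV : ∑' r : ℤ, (c q r * Q ^ r) * (e Q (n - r) * e Q ((n + 1) + r)) = 0 := by
      have h1 := (Equiv.subLeft (-1 : ℤ)).tsum_eq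
        (fun r : ℤ => (c q r * Q ^ r) * (e Q (n - r) * e Q ((n + 1) + r)))
      have h2 : ∀ r : ℤ, (c q (-1 - r) * Q ^ (-1 - r)) * (e Q (n - (-1 - r)) * e Q ((n + 1) + (-1 - r)))
          = - ((c q r * Q ^ r) * (e Q (n - r) * e Q ((n + 1) + r))) := by
        intro r
        rw [show (n : ℤ) - (-1 - r) = n + 1 + r by ring, show (n : ℤ) + 1 + (-1 - r) = n - r by ring]
        have h3 : c q (-1 - r) * Q ^ (-1 - r) = - (c q r * Q ^ r) := by
          unfold c
          rw [hz, hz, mul_assoc, mul_assoc, ← zpow_add₀ hq0, ← zpow_add₀ hq0]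
          have h4 : pe (-1 - r) + 2 * (-1 - r) = pe r + 2 * r := by
            have := two_pe r
            have := two_pe (-1 - r)
            apply mul_left_cancel₀ (two_ne_zero : (2 : ℤ) ≠ 0)
            linear_combination two_pe (-1 - r) - two_pe r
          rw [h4]
          have h5 : (-1 : ℂ) ^ (-1 - r) = -(-1) ^ r := by
            rw [← neg_one_zpow_add_one, show -1 - r = -(r + 1) by ring, zpow_neg, ← inv_zpow]
            norm_num
          rw [h5]; ring
        rw [h3]; ring
      simp only [Equiv.subLeft_apply, h2, tsum_neg] at h1
      have : (2 : ℂ) * ∑' r : ℤ, (c q r * Q ^ r) * (e Q (n - r) * e Q ((n + 1) + r)) = 0 := by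
        linear_combination -h1
      simpa using this
    have hA : (1 - Q ^ (2 * (n : ℤ) + 2)) * ∑' r : ℤ, c q r * (e Q ((n + 1 : ℕ) - r) * e Q ((n + 1 : ℕ) + r)) =
        ∑' r : ℤ, c q r * (e Q ((n + 1) - r) * e Q (n + r)) := by
      have : ∑' r : ℤ, c q r * (e Q ((n + 1) - r) * e Q (n + r)) =
        ∑' r : ℤ, c q r * (e Q ((n + 1) - r) * e Q (n + r)) + Q ^ ((n : ℤ) + 1) *
          ∑' r : ℤ, (c q r * Q ^ r) * (e Q (n - r) * e Q ((n + 1) + r)) := by rw [hV]; ring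
      rw [this, ← tsum_mul_left, ← tsum_mul_left,
        ← (summ_c _ Q _ _).tsum_add ((summ_c _ Q _ _).mul_left _)]
      congr 1
      ext r
      have hp := pascal hQ0 hQ ((n : ℤ) + 1 + r) ((n : ℤ) + 1 - r)
      rw [show (n : ℤ) + 1 + r + (n + 1 - r) = 2 * n + 2 by ring,
        show (n : ℤ) + 1 + r - 1 = n + r by ring, show (n : ℤ) + 1 - r - 1 = n - r by ring,
        zpow_add₀ hQ0 _ r] at hp
      push_cast
      linear_combination c q r * hp
    have hB : (1 - Q ^ (2 * (n : ℤ) + 1)) * ∑' r : ℤ, c q r * (e Q ((n + 1) - r) * e Q (n + r)) =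
        (1 - q * Q ^ n) * ∑' r : ℤ, c q r * (e Q (n - r) * e Q (n + r)) := by
      have h1 : ∑' r : ℤ, (Q ^ ((n : ℤ) + 1 - r) * c q r) * (e Q (n + 1 - r) * e Q (n - 1 + r)) =
          - (q * Q ^ n) * ∑' r : ℤ, c q r * (e Q (n - r) * e Q (n + r)) := by
        rw [← (Equiv.subLeft (1 : ℤ)).tsum_eq, ← tsum_mul_left]
        congr 1
        ext r
        simp only [Equiv.subLeft_apply]
        rw [show (n : ℤ) + 1 - (1 - r) = n + r by ring, show (n : ℤ) - 1 + (1 - r) = n - r by ring]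
        have h3 : Q ^ ((n : ℤ) + r) * c q (1 - r) = - (q * Q ^ n) * c q r := by
          unfold c
          rw [← zpow_natCast Q n, hz, hz]
          have h5 : (-1 : ℂ) ^ (1 - r) = -(-1) ^ r := by
            rw [← neg_one_zpow_add_one, show 1 - r = -(r + 1) + 2 by ring,
              zpow_add₀ (by norm_num), zpow_neg, ← inv_zpow]
            norm_num
          have h6 : q ^ (2 * ((n : ℤ) + r)) * q ^ pe (1 - r) = q * q ^ (2 * (n : ℤ)) * q ^ pe r := by
            rw [← zpow_one_add₀ hq0, ← zpow_add₀ hq0, ← zpow_add₀ hq0]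
            congr 1
            apply mul_left_cancel₀ (two_ne_zero : (2 : ℤ) ≠ 0)
            linear_combination two_pe (1 - r) - two_pe r
          rw [h5]
          linear_combination (-(-1) ^ r) * h6
        rw [h3]; ring
      have h2 : (1 - q * Q ^ n) * ∑' r : ℤ, c q r * (e Q (n - r) * e Q (n + r)) =
          ∑' r : ℤ, c q r * (e Q (n - r) * e Q (n + r)) +
          ∑' r : ℤ, (Q ^ ((n : ℤ) + 1 - r) * c q r) * (e Q (n + 1 - r) * e Q (n - 1 + r)) := by
        rw [h1]; ring
      rw [h2, ← (summ_c _ Q _ _).tsum_add (summ_c _ Q _ _), ← tsum_mul_left]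
      congr 1
      ext r
      have hp := pascal hQ0 hQ ((n : ℤ) + 1 - r) ((n : ℤ) + r)
      rw [show (n : ℤ) + 1 - r + (n + r) = 2 * n + 1 by ring,
        show (n : ℤ) + 1 - r - 1 = n - r by ring, show (n : ℤ) + r - 1 = n - 1 + r by ring] at hp
      linear_combination c q r * hp
    have hn1 : (1 - Q ^ (2 * (n : ℤ) + 1)) ≠ 0 := by
      have := one_sub_pow_ne hQ (2 * n); exact_mod_cast this
    have hn2 : (1 - Q ^ (2 * (n : ℤ) + 2)) ≠ 0 := by
      have := one_sub_pow_ne hQ (2 * n + 1); exact_mod_cast this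
    rw [ih, ← hA] at hB
    apply mul_left_cancel₀ hn2
    apply mul_left_cancel₀ hn1
    rw [hB, qPoch_succ]
    have e1 := e_rec hQ (2 * (n : ℤ) + 1)
    have e2 := e_rec hQ (2 * (n : ℤ) + 2)
    rw [show 2 * (n : ℤ) + 1 - 1 = 2 * n by ring] at e1
    rw [show 2 * (n : ℤ) + 2 - 1 = 2 * n + 1 by ring] at e2
    push_cast
    rw [show 2 * ((n : ℤ) + 1) = 2 * n + 2 by ring, ← e1, ← e2]
    ring

noncomputable def d (p z : ℂ) (r : ℤ) : ℂ := (-1) ^ r * p ^ (r * (r - 1) / 2) * z ^ r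

lemma d_succ {p z : ℂ} (hp : p ≠ 0) (hz : z ≠ 0) (r : ℤ) : d p z (r + 1) = - (p ^ r * z) * d p z r := by
  unfold d
  rw [neg_one_zpow_add_one, zpow_add_one₀ hz,
    show (r + 1) * (r + 1 - 1) / 2 = r + r * (r - 1) / 2 from ?_, zpow_add₀ hp]
  · ring
  · rw [show (r + 1) * (r + 1 - 1) = r * (r - 1) + r * 2 by ring, Int.add_mul_ediv_right _ _ two_ne_zero]
    ring

lemma finite_jtp {p z : ℂ} (hp0 : p ≠ 0) (hz : z ≠ 0) (hp : ‖p‖ < 1) (n : ℕ) :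
    ∑' r : ℤ, d p z r * (e p (n - r) * e p (n + r)) =
      qPoch z p n * qPoch (p / z) p n * e p (2 * n) := by
  induction n with
  | zero =>
    rw [tsum_eq_single 0]
    · simp [e_zero, d, qPoch]
    · intro i hi
      rcases lt_or_gt_of_ne hi with h | h
      · rw [e_neg _ (by push_cast; omega : ((0 : ℕ) : ℤ) + i < 0)]; simp
      · rw [e_neg _ (by push_cast; omega : ((0 : ℕ) : ℤ) - i < 0)]; simp
  | succ n ih =>
    have hn1 : (1 - p ^ (2 * (n : ℤ) + 1)) ≠ 0 := by
      have := one_sub_pow_ne hp (2 * n); exact_mod_cast this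
    have hn2 : (1 - p ^ (2 * (n : ℤ) + 2)) ≠ 0 := by
      have := one_sub_pow_ne hp (2 * n + 1); exact_mod_cast this
    have h1 : ∑' r : ℤ, (d p z r * p ^ ((n : ℤ) + 1 + r)) * (e p (n - 1 - r) * e p (n + 1 + r)) =
        - (p / z * p ^ n) * ∑' r : ℤ, d p z r * (e p (n - r) * e p (n + r)) := by
      rw [← (Equiv.addRight (1 : ℤ)).tsum_eq
        (fun r : ℤ => d p z r * (e p (n - r) * e p (n + r))), ← tsum_mul_left]
      congr 1
      ext r
      simp only [Equiv.coe_addRight]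
      rw [d_succ hp0 hz, show (n : ℤ) - (r + 1) = n - 1 - r by ring,
        show (n : ℤ) + (r + 1) = n + 1 + r by ring, zpow_add₀ hp0, zpow_add₀ hp0, zpow_one,
        zpow_natCast]
      field_simp
    have h2 : ∑' r : ℤ, (d p z r * p ^ ((n : ℤ) + 1 - r)) * (e p (n + 1 - r) * e p (n - 1 + r)) =
        - (z * p ^ n) * ∑' r : ℤ, d p z r * (e p (n - r) * e p (n + r)) := by
      rw [← (Equiv.addRight (1 : ℤ)).tsum_eq, ← tsum_mul_left]
      congr 1
      ext r
      simp only [Equiv.coe_addRight]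
      rw [d_succ hp0 hz, show (n : ℤ) + 1 - (r + 1) = n - r by ring,
        show (n : ℤ) - 1 + (r + 1) = n + r by ring, zpow_sub₀ hp0, zpow_natCast]
      have := zpow_ne_zero r hp0
      field_simp
    have key : (1 - p ^ (2 * (n : ℤ) + 1)) * ((1 - p ^ (2 * (n : ℤ) + 2)) *
        ∑' r : ℤ, d p z r * (e p ((n + 1 : ℕ) - r) * e p ((n + 1 : ℕ) + r))) =
        (1 - z * p ^ n) * (1 - p / z * p ^ n) * ∑' r : ℤ, d p z r * (e p (n - r) * e p (n + r)) := by
      have h3 : (1 - z * p ^ n) * (1 - p / z * p ^ n) * ∑' r : ℤ, d p z r * (e p (n - r) * e p (n + r)) =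
        (∑' r : ℤ, ((1 + p ^ (2 * (n : ℤ) + 1)) * d p z r) * (e p (n - r) * e p (n + r)) +
        ∑' r : ℤ, (d p z r * p ^ ((n : ℤ) + 1 + r)) * (e p (n - 1 - r) * e p (n + 1 + r))) +
        ∑' r : ℤ, (d p z r * p ^ ((n : ℤ) + 1 - r)) * (e p (n + 1 - r) * e p (n - 1 + r)) := by
        rw [h1, h2]
        simp only [mul_assoc (1 + p ^ (2 * (n : ℤ) + 1))]
        rw [tsum_mul_left]
        have : p ^ (2 * (n : ℤ) + 1) = p ^ n * p ^ n * p := by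
          rw [zpow_add_one₀ hp0, two_mul, zpow_add₀ hp0, zpow_natCast]
        rw [this]
        field_simp
        ring
      rw [h3, ← (summ_c _ p _ _).tsum_add (summ_c _ p _ _),
        ← ((summ_c _ p _ _).add (summ_c _ p _ _)).tsum_add (summ_c _ p _ _), ← tsum_mul_left,
        ← tsum_mul_left]
      congr 1
      ext r
      have hp1 := pascal hp0 hp ((n : ℤ) + 1 - r) ((n : ℤ) + 1 + r)
      rw [show (n : ℤ) + 1 - r + (n + 1 + r) = 2 * n + 2 by ring,
        show (n : ℤ) + 1 - r - 1 = n - r by ring, show (n : ℤ) + 1 + r - 1 = n + r by ring] at hp1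
      have hp2 := pascal hp0 hp ((n : ℤ) + 1 + r) ((n : ℤ) - r)
      rw [show (n : ℤ) + 1 + r + (n - r) = 2 * n + 1 by ring,
        show (n : ℤ) + 1 + r - 1 = n + r by ring, show (n : ℤ) - r - 1 = n - 1 - r by ring] at hp2
      have hp3 := pascal hp0 hp ((n : ℤ) + r) ((n : ℤ) + 1 - r)
      rw [show (n : ℤ) + r + (n + 1 - r) = 2 * n + 1 by ring,
        show (n : ℤ) + r - 1 = n - 1 + r by ring, show (n : ℤ) + 1 - r - 1 = n - r by ring] at hp3
      have hx : p ^ ((n : ℤ) + 1 - r) * p ^ ((n : ℤ) + r) = p ^ (2 * (n : ℤ) + 1) := by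
        rw [← zpow_add₀ hp0]; congr 1; ring
      push_cast
      linear_combination d p z r * (1 - p ^ (2 * (n : ℤ) + 1)) * hp1 + d p z r * hp2 +
        d p z r * p ^ ((n : ℤ) + 1 - r) * hp3 + d p z r * (e p (n - r) * e p (n + r)) * hx
    apply mul_left_cancel₀ hn2
    apply mul_left_cancel₀ hn1
    rw [key, ih, qPoch_succ, qPoch_succ]
    have e1 := e_rec hp (2 * (n : ℤ) + 1)
    have e2 := e_rec hp (2 * (n : ℤ) + 2)
    rw [show 2 * (n : ℤ) + 1 - 1 = 2 * n by ring] at e1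
    rw [show 2 * (n : ℤ) + 2 - 1 = 2 * n + 1 by ring] at e2
    push_cast
    rw [show 2 * ((n : ℤ) + 1) = 2 * n + 2 by ring, ← e1, ← e2]
    ring

lemma summable_geo (a : ℂ) {q : ℂ} (hq : ‖q‖ < 1) : Summable fun h : ℕ => ‖-(a * q ^ h)‖ := by
  simp only [norm_neg, norm_mul, norm_pow]
  exact (summable_geometric_of_lt_one (norm_nonneg q) hq).mul_left _

lemma mult_geo (a : ℂ) {q : ℂ} (hq : ‖q‖ < 1) : Multipliable fun h : ℕ => 1 - a * q ^ h := by
  simpa [sub_eq_add_neg] using multipliable_one_add_of_summable (summable_geo a hq)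

lemma tendsto_qPoch (a : ℂ) {q : ℂ} (hq : ‖q‖ < 1) :
    Tendsto (qPoch a q) atTop (𝓝 (qPochInf a q)) :=
  (mult_geo a hq).tendsto_prod_tprod_nat

lemma qPochInf_ne {q : ℂ} (hq : ‖q‖ < 1) : qPochInf q q ≠ 0 := by
  have := tprod_one_add_ne_zero_of_summable (f := fun h : ℕ => -(q * q ^ h)) (fun h => by
    have := one_sub_pow_ne hq h
    rwa [pow_succ', sub_eq_add_neg] at this) (summable_geo q hq)
  simpa [qPochInf, sub_eq_add_neg] using this

lemma tendsto_e {Q : ℂ} (hQ : ‖Q‖ < 1) : Tendsto (e Q) atTop (𝓝 (qPochInf Q Q)⁻¹) := by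
  have h1 : Tendsto Int.toNat atTop atTop :=
    tendsto_atTop_atTop.mpr fun b => ⟨b, fun a ha => by omega⟩
  have h2 := ((tendsto_qPoch Q hQ).inv₀ (qPochInf_ne hQ)).comp h1
  refine h2.congr' ?_
  filter_upwards [eventually_ge_atTop (0 : ℤ)] with n hn
  simp [e, not_lt.mpr hn]

lemma tendsto_bdd {f : ℕ → ℂ} {a : ℂ} (h : Tendsto f atTop (𝓝 a)) : ∃ C, 0 ≤ C ∧ ∀ n, ‖f n‖ ≤ C := by
  obtain ⟨C, hC⟩ := h.norm.bddAbove_range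
  exact ⟨C, (norm_nonneg _).trans (hC ⟨0, rfl⟩), fun n => hC ⟨n, rfl⟩⟩

lemma e_bdd {Q : ℂ} (hQ : ‖Q‖ < 1) : ∃ C, 0 ≤ C ∧ ∀ n, ‖e Q n‖ ≤ C := by
  obtain ⟨C, h0, hC⟩ := tendsto_bdd ((tendsto_qPoch Q hQ).inv₀ (qPochInf_ne hQ))
  refine ⟨C, h0, fun n => ?_⟩
  unfold e
  split_ifs
  · simpa using h0
  · exact hC _

lemma lim_sum {Q : ℂ} (hQ : ‖Q‖ < 1) {w : ℤ → ℂ} (hw : Summable fun r => ‖w r‖) :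
    Tendsto (fun L : ℕ => ∑' r : ℤ, w r * (e Q (L - r) * e Q (L + r))) atTop
      (𝓝 ((∑' r, w r) * ((qPochInf Q Q)⁻¹ * (qPochInf Q Q)⁻¹))) := by
  obtain ⟨C, h0, hC⟩ := e_bdd hQ
  rw [← tsum_mul_right]
  refine tendsto_tsum_of_dominated_convergence (bound := fun r => ‖w r‖ * (C * C))
    (hw.mul_right _) (fun r => ?_) (Eventually.of_forall fun L r => ?_)
  · have h1 : Tendsto (fun L : ℕ => (L : ℤ) - r) atTop atTop :=
      tendsto_atTop_add_const_right _ (-r) tendsto_natCast_atTop_atTop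
    have h2 : Tendsto (fun L : ℕ => (L : ℤ) + r) atTop atTop :=
      tendsto_atTop_add_const_right _ r tendsto_natCast_atTop_atTop
    exact (((tendsto_e hQ).comp h1).mul ((tendsto_e hQ).comp h2)).const_mul _
  · rw [norm_mul, norm_mul]
    gcongr
    · exact hC _
    · exact hC _

lemma w_eq {q : ℂ} (hq0 : q ≠ 0) (r : ℤ) : c q r * (q ^ 2) ^ (r ^ 2) = d (q ^ 7) (q ^ 3) r := by
  unfold c d
  rw [← zpow_natCast q 2, ← zpow_natCast q 7, ← zpow_natCast q 3, ← zpow_mul, ← zpow_mul, ← zpow_mul,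
    mul_assoc, mul_assoc, ← zpow_add₀ hq0, ← zpow_add₀ hq0]
  congr 2
  have h1 : 2 * (r * (r - 1) / 2) = r * (r - 1) :=
    Int.mul_ediv_cancel' (Int.even_mul_pred_self r).two_dvd
  apply mul_left_cancel₀ (two_ne_zero : (2 : ℤ) ≠ 0)
  push_cast
  linear_combination two_pe r - 7 * h1

lemma w_summable {q : ℂ} (hq0 : q ≠ 0) (hq : ‖q‖ < 1) :
    Summable fun r => ‖c q r * (q ^ 2) ^ (r ^ 2)‖ := by
  have hb : ∀ r : ℤ, ‖c q r * (q ^ 2) ^ (r ^ 2)‖ ≤ ‖q‖ ^ r.natAbs := by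
    intro r
    unfold c
    rw [← zpow_natCast q 2, ← zpow_mul, mul_assoc, ← zpow_add₀ hq0, norm_mul, norm_zpow, norm_zpow,
      norm_neg, norm_one, one_zpow, one_mul, ← zpow_natCast]
    refine zpow_le_zpow_right_of_le_one₀ (norm_pos_iff.mpr hq0) hq.le ?_
    have h1 := two_pe r
    have h2 : |r| ≤ r ^ 2 := by
      rw [← sq_abs]
      rcases eq_or_ne r 0 with h | h
      · simp [h]
      · have : 1 ≤ |r| := Int.one_le_abs h
        nlinarith
    have h3 := le_abs_self r
    have h4 := abs_nonneg r
    rw [Int.natCast_natAbs]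
    push_cast
    nlinarith
  have hg := summable_geometric_of_lt_one (norm_nonneg q) hq
  refine Summable.of_nonneg_of_le (fun _ => norm_nonneg _) hb ?_
  rw [summable_int_iff_summable_nat_and_neg]
  constructor <;> simpa using hg

lemma jtp {q : ℂ} (hq0 : q ≠ 0) (hq : ‖q‖ < 1) :
    ∑' r : ℤ, c q r * (q ^ 2) ^ (r ^ 2) =
      qPochInf (q ^ 3) (q ^ 7) * qPochInf (q ^ 4) (q ^ 7) * qPochInf (q ^ 7) (q ^ 7) := by
  have hp : ‖q ^ 7‖ < 1 := by rw [norm_pow]; exact pow_lt_one₀ (norm_nonneg _) hq (by norm_num)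
  have h1 := lim_sum hp (w_summable hq0 hq)
  simp only [w_eq hq0] at h1 ⊢
  have h74 : q ^ 7 / q ^ 3 = q ^ 4 := by field_simp
  simp only [finite_jtp (pow_ne_zero 7 hq0) (pow_ne_zero 3 hq0) hp, h74] at h1
  have h2 : Tendsto (fun L : ℕ => 2 * (L : ℤ)) atTop atTop :=
    tendsto_natCast_atTop_atTop.const_mul_atTop' (by norm_num)
  have h3 := tendsto_nhds_unique h1
    (((tendsto_qPoch (q ^ 3) hp).mul (tendsto_qPoch (q ^ 4) hp)).mul ((tendsto_e hp).comp h2))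
  have := qPochInf_ne hp
  field_simp at h3
  linear_combination h3

lemma tsum_int_nat (f : ℤ → ℂ) (h : ∀ j < 0, f j = 0) : ∑' j : ℤ, f j = ∑' j : ℕ, f j := by
  symm
  refine (Nat.cast_injective (R := ℤ)).tsum_eq fun j hj => ?_
  by_contra h1
  apply hj
  apply h
  by_contra h2
  exact h1 ⟨j.toNat, by omega⟩

lemma bailey_sum {q : ℂ} (hq0 : q ≠ 0) (hq : ‖q‖ < 1) (L : ℕ) :
    ∑' j : ℕ, (q ^ 2) ^ (j ^ 2) * e (q ^ 2) (L - j) * (qPoch q (q ^ 2) j * e (q ^ 2) (2 * j)) =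
    ∑' r : ℤ, (c q r * (q ^ 2) ^ (r ^ 2)) * (e (q ^ 2) (L - r) * e (q ^ 2) (L + r)) := by
  have hQ : ‖q ^ 2‖ < 1 := by rw [norm_pow]; exact pow_lt_one₀ (norm_nonneg _) hq (by norm_num)
  have hQ0 := pow_ne_zero 2 hq0
  set Q := q ^ 2 with hQd
  have h1 : ∀ j : ℕ, Q ^ (j ^ 2) * e Q (L - j) * (qPoch q Q j * e Q (2 * j)) =
      (fun j : ℤ => ∑' r : ℤ, Q ^ (j ^ 2) * e Q (L - j) * (c q r * (e Q (j - r) * e Q (j + r)))) j := by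
    intro j
    simp only
    rw [tsum_mul_left, finite_pent hq0 hQ]
    norm_cast
  have hz : ∀ j r : ℤ, Q ^ (j ^ 2) * e Q (L - j) * (c q r * (e Q (j - r) * e Q (j + r))) ≠ 0 →
      0 ≤ j ∧ j ≤ L ∧ -(L : ℤ) ≤ r ∧ r ≤ L := by
    intro j r h
    simp only [ne_eq, mul_eq_zero, not_or] at h
    have := e_ne h.1.2
    have := e_ne h.2.2.1
    have := e_ne h.2.2.2
    omega
  rw [tsum_congr h1, ← tsum_int_nat (fun j : ℤ => ∑' r : ℤ, Q ^ (j ^ 2) * e Q (L - j) *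
    (c q r * (e Q (j - r) * e Q (j + r)))), Summable.tsum_comm]
  · congr 1
    ext r
    have := bailey hQ0 hQ L r
    rw [mul_assoc, ← this, ← tsum_mul_left]
    congr 1
    ext j
    ring
  · refine summable_of_ne_finset_zero
      (s := Finset.Icc (-(L : ℤ)) L ×ˢ Finset.Icc (-(L : ℤ)) L) fun b hb => ?_
    by_contra h
    have := hz _ _ h
    apply hb
    simp only [Finset.mem_product, Finset.mem_Icc]
    omega
  · intro j hj
    have : ∀ r : ℤ, Q ^ (j ^ 2) * e Q (L - j) * (c q r * (e Q (j - r) * e Q (j + r))) = 0 := by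
      intro r
      by_contra h
      have := hz _ _ h
      omega
    simp [this]

lemma main_sum {q : ℂ} (hq0 : q ≠ 0) (hq : ‖q‖ < 1) :
    ∑' j : ℕ, (q ^ 2) ^ (j ^ 2) * (qPoch q (q ^ 2) j * e (q ^ 2) (2 * j)) =
    qPochInf (q ^ 3) (q ^ 7) * qPochInf (q ^ 4) (q ^ 7) * qPochInf (q ^ 7) (q ^ 7) *
      (qPochInf (q ^ 2) (q ^ 2))⁻¹ := by
  have hQ : ‖q ^ 2‖ < 1 := by rw [norm_pow]; exact pow_lt_one₀ (norm_nonneg _) hq (by norm_num)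
  have hl := lim_sum hQ (w_summable hq0 hq)
  simp only [← bailey_sum hq0 hq, jtp hq0 hq] at hl
  obtain ⟨C, hC0, hC⟩ := e_bdd hQ
  obtain ⟨D, hD0, hD⟩ := tendsto_bdd (tendsto_qPoch q hQ)
  have h1 : Tendsto (fun L : ℕ => ∑' j : ℕ, (q ^ 2) ^ (j ^ 2) * e (q ^ 2) (L - j) *
      (qPoch q (q ^ 2) j * e (q ^ 2) (2 * j))) atTop
      (𝓝 (∑' j : ℕ, (q ^ 2) ^ (j ^ 2) * (qPochInf (q ^ 2) (q ^ 2))⁻¹ *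
      (qPoch q (q ^ 2) j * e (q ^ 2) (2 * j)))) := by
    refine tendsto_tsum_of_dominated_convergence (bound := fun j => ‖q ^ 2‖ ^ j * C * (D * C))
      (((summable_geometric_of_lt_one (norm_nonneg _) hQ).mul_right _).mul_right _)
      (fun j => ?_) (Eventually.of_forall fun L j => ?_)
    · have h1 : Tendsto (fun L : ℕ => (L : ℤ) - j) atTop atTop :=
        tendsto_atTop_add_const_right _ (-(j : ℤ)) tendsto_natCast_atTop_atTop
      exact (((tendsto_e hQ).comp h1).const_mul _).mul_const _
    · rw [norm_mul, norm_mul, norm_mul, norm_pow _ (j ^ 2)]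
      have : ‖q ^ 2‖ ^ (j ^ 2) ≤ ‖q ^ 2‖ ^ j :=
        pow_le_pow_of_le_one (norm_nonneg _) hQ.le (Nat.le_self_pow two_ne_zero j)
      gcongr
      · exact hC _
      · exact hD _
      · exact hC _
  have h2 := tendsto_nhds_unique h1 hl
  have hne := qPochInf_ne hQ
  have h3 : ∀ j : ℕ, (q ^ 2) ^ (j ^ 2) * (qPochInf (q ^ 2) (q ^ 2))⁻¹ *
      (qPoch q (q ^ 2) j * e (q ^ 2) (2 * j)) = (qPochInf (q ^ 2) (q ^ 2))⁻¹ *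
      ((q ^ 2) ^ (j ^ 2) * (qPoch q (q ^ 2) j * e (q ^ 2) (2 * j))) := fun j => by ring
  simp only [h3, tsum_mul_left] at h2
  apply mul_left_cancel₀ (inv_ne_zero hne)
  rw [h2]; ring

lemma qPoch_two_mul (q : ℂ) (n : ℕ) : qPoch q q (2 * n) = qPoch q (q ^ 2) n * qPoch (q ^ 2) (q ^ 2) n := by
  induction n with
  | zero => simp [qPoch]
  | succ n ih =>
    rw [show 2 * (n + 1) = 2 * n + 1 + 1 by ring, qPoch_succ, qPoch_succ, ih, qPoch_succ, qPoch_succ,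
      ← pow_mul, pow_succ q (2 * n)]
    ring

lemma qPoch_pm (q : ℂ) (n : ℕ) : qPoch q q n * qPoch (-q) q n = qPoch (q ^ 2) (q ^ 2) n := by
  unfold qPoch
  rw [← Finset.prod_mul_distrib]
  refine Finset.prod_congr rfl fun h _ => ?_
  rw [← pow_mul, mul_comm 2 h, pow_mul]
  ring

lemma qPochInf_pm {q : ℂ} (hq : ‖q‖ < 1) : qPochInf q q * qPochInf (-q) q = qPochInf (q ^ 2) (q ^ 2) := by
  have hQ : ‖q ^ 2‖ < 1 := by rw [norm_pow]; exact pow_lt_one₀ (norm_nonneg _) hq (by norm_num)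
  refine tendsto_nhds_unique ((tendsto_qPoch q hq).mul (tendsto_qPoch (-q) hq)) ?_
  simp only [qPoch_pm]
  exact tendsto_qPoch _ hQ

lemma qPoch_shift {q : ℂ} (hq : ‖q‖ < 1) (a : ℂ) (n : ℕ) :
    qPoch a q n * qPochInf (a * q ^ n) q = qPochInf a q := by
  refine tendsto_nhds_unique ((tendsto_qPoch (a * q ^ n) hq).const_mul _)
    (((tendsto_qPoch a hq).comp (tendsto_add_atTop_nat n)).congr fun m => ?_)
  simp only [Function.comp, qPoch]
  rw [add_comm m n, Finset.prod_range_add]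
  congr 1
  refine Finset.prod_congr rfl fun h _ => ?_
  rw [pow_add]; ring

lemma term_eq {q : ℂ} (hq : ‖q‖ < 1) (j : ℕ) :
    q ^ (2 * j ^ 2) * qPochInf (-(q ^ (2 * j + 1))) q / qPoch (q ^ 2) (q ^ 2) j =
    qPochInf (-q) q * ((q ^ 2) ^ (j ^ 2) * (qPoch q (q ^ 2) j * e (q ^ 2) (2 * j))) := by
  have hQ : ‖q ^ 2‖ < 1 := by rw [norm_pow]; exact pow_lt_one₀ (norm_nonneg _) hq (by norm_num)
  have h1 := qPoch_shift hq (-q) (2 * j)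
  rw [show -q * q ^ (2 * j) = -(q ^ (2 * j + 1)) by ring] at h1
  have h2 := qPoch_pm q (2 * j)
  rw [qPoch_two_mul] at h2
  have h3 : e (q ^ 2) (2 * j) = (qPoch (q ^ 2) (q ^ 2) (2 * j))⁻¹ := by
    rw [← e_nat, Nat.cast_mul, Nat.cast_ofNat]
  have h4 := qPoch_ne hQ (2 * j)
  have h5 := qPoch_ne hQ j
  rw [h3, ← h1, pow_mul]
  rw [← h2] at h4 ⊢
  simp only [ne_eq, mul_eq_zero, not_or] at h4
  obtain ⟨⟨h6, _⟩, h7⟩ := h4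
  field_simp

/-- indicator factor -/
noncomputable def g (q : ℂ) (n : ℕ) : ℂ :=
  if 0 < n ∧ n % 7 ≠ 0 ∧ n % 7 ≠ 3 ∧ n % 7 ≠ 4 then 1 - q ^ n else 1

lemma g_prod (q : ℂ) (N : ℕ) :
    (∏ n ∈ Finset.range (7 * N), g q (n + 1)) *
      (qPoch (q ^ 3) (q ^ 7) N * qPoch (q ^ 4) (q ^ 7) N * qPoch (q ^ 7) (q ^ 7) N) =
    qPoch q q (7 * N) := by
  induction N with
  | zero => simp [qPoch]
  | succ N ih =>
    rw [show 7 * (N + 1) = 7 * N + 1 + 1 + 1 + 1 + 1 + 1 + 1 by ring]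
    simp only [Finset.prod_range_succ, qPoch_succ]
    rw [← ih]
    have m1 : g q (7 * N + 1) = 1 - q * q ^ (7 * N) := by
      unfold g; rw [if_pos (by omega)]; ring
    have m2 : g q (7 * N + 1 + 1) = 1 - q * q ^ (7 * N + 1) := by
      unfold g; rw [if_pos (by omega)]; ring
    have m3 : g q (7 * N + 1 + 1 + 1) = 1 := by
      unfold g; rw [if_neg (by omega)]
    have m4 : g q (7 * N + 1 + 1 + 1 + 1) = 1 := by
      unfold g; rw [if_neg (by omega)]
    have m5 : g q (7 * N + 1 + 1 + 1 + 1 + 1) = 1 - q * q ^ (7 * N + 1 + 1 + 1 + 1) := by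
      unfold g; rw [if_pos (by omega)]; ring
    have m6 : g q (7 * N + 1 + 1 + 1 + 1 + 1 + 1) = 1 - q * q ^ (7 * N + 1 + 1 + 1 + 1 + 1) := by
      unfold g; rw [if_pos (by omega)]; ring
    have m7 : g q (7 * N + 1 + 1 + 1 + 1 + 1 + 1 + 1) = 1 := by
      unfold g; rw [if_neg (by omega)]
    rw [m1, m2, m3, m4, m5, m6, m7, ← pow_mul]
    ring

lemma g_summable {q : ℂ} (hq : ‖q‖ < 1) : Summable fun n => ‖g q n - 1‖ := by
  refine Summable.of_nonneg_of_le (fun _ => norm_nonneg _) (fun n => ?_)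
    (summable_geometric_of_lt_one (norm_nonneg q) hq)
  unfold g
  split_ifs
  · simp
  · simp

lemma g_ne {q : ℂ} (hq : ‖q‖ < 1) (n : ℕ) : g q n ≠ 0 := by
  unfold g
  split_ifs with h
  · obtain ⟨m, rfl⟩ : ∃ m, n = m + 1 := ⟨n - 1, by omega⟩
    exact one_sub_pow_ne hq m
  · exact one_ne_zero

lemma g_mult {q : ℂ} (hq : ‖q‖ < 1) : Multipliable (g q) := by
  simpa using multipliable_one_add_of_summable (g_summable hq)

lemma g_tprod_ne {q : ℂ} (hq : ‖q‖ < 1) : ∏' n, g q n ≠ 0 := by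
  have := tprod_one_add_ne_zero_of_summable (f := fun n => g q n - 1)
    (fun n => by simpa using g_ne hq n) (g_summable hq)
  simpa using this

lemma g_total {q : ℂ} (hq : ‖q‖ < 1) :
    (∏' n, g q n) * (qPochInf (q ^ 3) (q ^ 7) * qPochInf (q ^ 4) (q ^ 7) * qPochInf (q ^ 7) (q ^ 7)) =
      qPochInf q q := by
  have hp : ‖q ^ 7‖ < 1 := by rw [norm_pow]; exact pow_lt_one₀ (norm_nonneg _) hq (by norm_num)
  have h7 : Tendsto (fun N : ℕ => 7 * N) atTop atTop :=
    tendsto_atTop_atTop.mpr fun b => ⟨b, fun a ha => by omega⟩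
  have h1 := ((g_mult hq).tendsto_prod_tprod_nat.comp (tendsto_add_atTop_nat 1)).comp h7
  have h2 := h1.mul (((tendsto_qPoch (q ^ 3) hp).mul (tendsto_qPoch (q ^ 4) hp)).mul
    (tendsto_qPoch (q ^ 7) hp))
  refine tendsto_nhds_unique h2 (((tendsto_qPoch q hq).comp h7).congr fun N => ?_)
  simp only [Function.comp]
  rw [← g_prod, Finset.prod_range_succ']
  simp [g]

lemma rhs_eq {q : ℂ} (hq : ‖q‖ < 1) :
    ∏' j : {j : ℕ // 0 < j ∧ j % 7 ≠ 0 ∧ j % 7 ≠ 3 ∧ j % 7 ≠ 4}, (1 - q ^ (j : ℕ))⁻¹ =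
      (∏' n, g q n)⁻¹ := by
  have h1 : ∏' n, (g q n)⁻¹ = (∏' n, g q n)⁻¹ := by
    have : HasProd (fun n => (g q n)⁻¹) (∏' n, g q n)⁻¹ := by
      have h := (g_mult hq).hasProd
      have h2 := Tendsto.inv₀ h (g_tprod_ne hq)
      refine h2.congr fun s => ?_
      rw [Finset.prod_inv_distrib]
    exact this.tprod_eq
  rw [← h1]
  refine (tprod_subtype {j : ℕ | 0 < j ∧ j % 7 ≠ 0 ∧ j % 7 ≠ 3 ∧ j % 7 ≠ 4}
    (fun j => (1 - q ^ j)⁻¹)).trans ?_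
  congr 1
  ext n
  unfold g
  by_cases h : 0 < n ∧ n % 7 ≠ 0 ∧ n % 7 ≠ 3 ∧ n % 7 ≠ 4
  · rw [Set.mulIndicator_of_mem (show n ∈ {j : ℕ | 0 < j ∧ j % 7 ≠ 0 ∧ j % 7 ≠ 3 ∧ j % 7 ≠ 4} from h),
      if_pos h]
  · rw [Set.mulIndicator_of_notMem (show n ∉ {j : ℕ | 0 < j ∧ j % 7 ≠ 0 ∧ j % 7 ≠ 3 ∧ j % 7 ≠ 4} from h),
      if_neg h, inv_one]

end RS

/-- The third Rogers–Selberg identity (mod 7). -/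
theorem rogers_selberg_third (q : ℂ) (hq : ‖q‖ < 1) :
    ∑' j : ℕ, q ^ (2 * j ^ 2) * qPochInf (-(q ^ (2 * j + 1))) q / qPoch (q ^ 2) (q ^ 2) j =
      ∏' j : {j : ℕ // 0 < j ∧ j % 7 ≠ 0 ∧ j % 7 ≠ 3 ∧ j % 7 ≠ 4},
        (1 - q ^ (j : ℕ))⁻¹ := by
  rw [RS.rhs_eq hq]
  by_cases hq0 : q = 0
  · subst hq0
    rw [tsum_eq_single 0]
    · have : ∀ n, RS.g 0 n = 1 := by
        intro n
        unfold RS.g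
        split_ifs with h
        · simp [h.1.ne']
        · rfl
      simp [this, qPoch, qPochInf]
    · intro j hj
      simp [hj]
  · rw [tsum_congr (RS.term_eq hq), tsum_mul_left, RS.main_sum hq0 hq]
    have h1 := RS.g_total hq
    have h2 := RS.qPochInf_pm hq
    have h3 := RS.qPochInf_ne hq
    have h4 := RS.g_tprod_ne hq
    have hQ : ‖q ^ 2‖ < 1 := by rw [norm_pow]; exact pow_lt_one₀ (norm_nonneg _) hq (by norm_num)
    have h5 := RS.qPochInf_ne hQ
    apply eq_inv_of_mul_eq_one_left
    rw [← h2] at h5 ⊢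
    have h6 := right_ne_zero_of_mul h5
    field_simp
    linear_combination h1
end

section
/- Let k and i be integers with 1 ≤ i ≤ k. For every natural number n, the number of partitions of n in which the part 1 appears at most i−1 times and, for every positive integer j, the total number of appearances of j and j+1 together is at most k−1, equals the number of partitions of n into parts none of which is congruent to 0, i, or −i modulo 2k+1. -/
namespace GordonProof
open Finset

section Algebra
variable {R : Type*} [CommRing R]

/-- shifted finite product `∏_{j=1}^N (1 - q^(n+j))` -/
def T (q : R) (N n : ℕ) : R := ∏ j ∈ range N, (1 - q ^ (n + j + 1))

lemma T_succ (q : R) (N n : ℕ) : T q (N + 1) n = T q N n * (1 - q ^ (n + N + 1)) := by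
  simp [T, prod_range_succ]

lemma T_succ' (q : R) (N n : ℕ) : T q (N + 1) n = (1 - q ^ (n + 1)) * T q N (n + 1) := by
  unfold T
  rw [prod_range_succ', mul_comm]
  congr 1
  exact prod_congr rfl fun j _ => by ring_nf

/-- the alternating sum -/
def A (q : R) (L k N i : ℕ) : R :=
  ∑ n ∈ range L, (-1) ^ n * q ^ (k * N * n + (2 * k + 1) * n.choose 2 + (2 * k + 1 - i) * n) *
    (1 - q ^ ((N + 2 * n + 1) * i)) * T q N n

lemma choose_two_succ (n : ℕ) : (n + 1).choose 2 = n + n.choose 2 := by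
  rw [Nat.choose_succ_succ' n 1]; simp

lemma pow_zero_of_le {q : R} {K : ℕ} (hq : q ^ K = 0) {m : ℕ} (h : K ≤ m) : q ^ m = 0 :=
  pow_eq_zero_of_le h hq

lemma A_zero (q : R) (L k N : ℕ) : A q L k N 0 = 0 := by simp [A]

lemma A_succ (q : R) (L k N i : ℕ) (hq : q ^ L = 0) (hi : i + 1 ≤ k) :
    A q L k N (i + 1) = A q L k N i + q ^ ((N + 1) * i) * A q L k (N + 1) (k - i) := by
  obtain ⟨d, rfl⟩ := Nat.exists_eq_add_of_le hi
  set k := i + 1 + d with hk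
  have e1 : k - i = d + 1 := by omega
  have e2 : 2 * k + 1 - (i + 1) = i + 2 + 2 * d := by omega
  have e3 : 2 * k + 1 - i = i + 3 + 2 * d := by omega
  have e4 : 2 * k + 1 - (d + 1) = 2 * i + 2 + d := by omega
  let u : ℕ → R := fun n =>
    (-1) ^ n * q ^ (k * N * n + (2 * k + 1) * n.choose 2 + (i + 2 + 2 * d) * n) *
      (1 - q ^ n) * T q N n
  let v : ℕ → R := fun n =>
    (-1) ^ n * q ^ (k * N * n + (2 * k + 1) * n.choose 2 + (2 * k + 1) * n + n * i + (N + 1) * i) *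
      T q (N + 1) n
  have h0 : u 0 = 0 := by simp [u]
  have hL : u L = 0 := by
    have : q ^ (k * N * L + (2 * k + 1) * L.choose 2 + (i + 2 + 2 * d) * L) = 0 :=
      pow_zero_of_le hq (by nlinarith [Nat.zero_le (k * N * L), Nat.zero_le ((2 * k + 1) * L.choose 2), Nat.zero_le ((i + 1 + 2 * d) * L)])
    simp [u, this]
  have hshift : ∑ n ∈ range L, u n = ∑ n ∈ range L, u (n + 1) := by
    have := sum_range_succ u L
    rw [sum_range_succ' u L] at this
    rw [h0, hL] at this
    simpa using this.symm
  have hleft : A q L k N (i + 1) - A q L k N i = ∑ n ∈ range L, (u n + v n) := by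
    unfold A
    rw [← sum_sub_distrib]
    refine sum_congr rfl fun n _ => ?_
    simp only [u, v, e2, e3, T_succ]
    rw [hk]
    ring
  have hright : q ^ ((N + 1) * i) * A q L k (N + 1) (k - i)
      = ∑ n ∈ range L, (v n + u (n + 1)) := by
    unfold A
    rw [mul_sum]
    refine sum_congr rfl fun n _ => ?_
    have ht := T_succ' q N n
    have : u (n + 1) = (-1) ^ (n + 1) *
        q ^ (k * N * (n + 1) + (2 * k + 1) * (n + 1).choose 2 + (i + 2 + 2 * d) * (n + 1)) *
        T q (N + 1) n := by
      simp only [u]; rw [ht]; ring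
    rw [this]
    simp only [v, e1, e4, choose_two_succ]
    rw [hk]
    ring
  rw [sum_add_distrib] at hleft hright
  rw [hright, ← hshift]
  linear_combination hleft

/-- Gaussian binomial coefficients -/
def gb (Q : R) : ℕ → ℕ → R
  | _, 0 => 1
  | 0, _ + 1 => 0
  | n + 1, j + 1 => Q ^ (j + 1) * gb Q n (j + 1) + gb Q n j

lemma gb_zero (Q : R) (n : ℕ) : gb Q n 0 = 1 := by cases n <;> rfl

lemma gb_lt (Q : R) : ∀ n j : ℕ, n < j → gb Q n j = 0
  | 0, j + 1, _ => rfl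
  | n + 1, j + 1, h => by
    simp [gb, gb_lt Q n (j + 1) (by omega), gb_lt Q n j (by omega)]

lemma gb_binomial (Q y : R) (L : ℕ) : ∀ x : R, ∏ m ∈ range L, (y + x * Q ^ m) =
    ∑ j ∈ range (L + 1), gb Q L j * Q ^ (j.choose 2) * x ^ j * y ^ (L - j) := by
  induction L with
  | zero => intro x; simp [gb]
  | succ L ih =>
    intro x
    rw [prod_range_succ']
    have : ∏ m ∈ range L, (y + x * Q ^ (m + 1)) = ∏ m ∈ range L, (y + (x * Q) * Q ^ m) :=
      prod_congr rfl fun m _ => by ring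
    rw [this, ih]
    rw [sum_range_succ' _ (L + 1)]
    have h1 : ∀ j ∈ range (L + 1), gb Q (L + 1) (j + 1) * Q ^ ((j + 1).choose 2) * x ^ (j + 1)
        * y ^ (L + 1 - (j + 1)) =
        x * (gb Q L j * Q ^ (j.choose 2) * (x * Q) ^ j * y ^ (L - j)) +
        y * (if j < L then gb Q L (j + 1) * Q ^ ((j + 1).choose 2) * (x * Q) ^ (j + 1) * y ^ (L - (j + 1)) else 0) := by
      intro j hj
      have hj : j ≤ L := by simpa [Nat.lt_succ_iff] using hj
      rw [choose_two_succ, Nat.add_sub_add_right, gb]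
      split_ifs with h
      · obtain ⟨r, rfl⟩ := Nat.exists_eq_add_of_lt h
        have : j + r + 1 - (j + 1) = r := by omega
        have h2 : j + r + 1 - j = r + 1 := by omega
        rw [this, h2]; ring
      · rw [gb_lt Q L (j + 1) (by omega)]; ring
    rw [sum_congr rfl h1, sum_add_distrib, ← mul_sum, ← mul_sum]
    have h2 : ∑ j ∈ range (L + 1), gb Q L j * Q ^ (j.choose 2) * (x * Q) ^ j * y ^ (L - j) =
        (∑ j ∈ range (L + 1), (if j < L then gb Q L (j + 1) * Q ^ ((j + 1).choose 2) * (x * Q) ^ (j + 1) * y ^ (L - (j + 1)) else 0)) + y ^ L := by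
      rw [sum_range_succ' (fun j => gb Q L j * Q ^ (j.choose 2) * (x * Q) ^ j * y ^ (L - j)) L, sum_range_succ _ L]
      rw [if_neg (lt_irrefl L), add_zero]
      congr 1
      · exact sum_congr rfl fun j hj => by rw [if_pos (mem_range.1 hj)]
      · simp [gb_zero]
    simp only [gb_zero, pow_zero, mul_one, Nat.sub_zero]
    have e : (Nat.choose 0 2) = 0 := rfl
    rw [e, pow_zero]
    linear_combination y * h2

lemma gb_factor (Q : R) : ∀ s a b : ℕ, a + b = s →
    gb Q (a + b) a * T Q a 0 * T Q b 0 = T Q (a + b) 0 := by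
  intro s
  induction s with
  | zero =>
    intro a b h
    obtain ⟨rfl, rfl⟩ : a = 0 ∧ b = 0 := by omega
    simp [gb, T]
  | succ s ih =>
    intro a b h
    cases a with
    | zero => simp [gb_zero, T]
    | succ a =>
      cases b with
      | zero =>
        have h1 := ih a 0 (by omega)
        simp only [add_zero] at h1 ⊢
        rw [gb, gb_lt Q a (a + 1) (by omega), T_succ]
        linear_combination (1 - Q ^ (0 + a + 1)) * h1
      | succ b =>
        have h1 := ih (a + 1) b (by omega)
        have h2 := ih a (b + 1) (by omega)
        have e1 : a + 1 + (b + 1) = (a + b + 1) + 1 := by omega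
        have e2 : a + 1 + b = a + b + 1 := by omega
        have e3 : a + (b + 1) = a + b + 1 := by omega
        rw [e2] at h1
        rw [e3] at h2
        rw [e1, gb, T_succ Q (a + b + 1)]
        rw [T_succ Q b] at h2 ⊢
        rw [T_succ Q a] at h1 ⊢
        linear_combination Q ^ (a + 1) * (1 - Q ^ (b + 1)) * h1 + (1 - Q ^ (a + 1)) * h2

lemma choose_two_add (m n : ℕ) : (m + n).choose 2 = m.choose 2 + n.choose 2 + m * n := by
  induction n with
  | zero => simp
  | succ n ih => rw [← add_assoc, choose_two_succ, choose_two_succ, ih]; ring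

lemma two_choose_two (n : ℕ) : 2 * n.choose 2 + n = n * n := by
  induction n with
  | zero => simp
  | succ n ih => rw [choose_two_succ]; nlinarith

lemma prod_shift (a b Q : R) (hab : a * b = Q) (M : ℕ) :
    ∏ m ∈ range (M + M), (Q ^ M + (-a) * Q ^ m) = Q ^ (M.choose 2 + M * M) * (-a) ^ M *
      ∏ m ∈ range M, ((1 - a * Q ^ m) * (1 - b * Q ^ m)) := by
  rw [prod_range_add]
  have h1 : ∏ m ∈ range M, (Q ^ M + (-a) * Q ^ (M + m)) =
      Q ^ (M * M) * ∏ m ∈ range M, (1 - a * Q ^ m) := by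
    have : Q ^ (M * M) = ∏ m ∈ range M, Q ^ M := by simp [pow_mul]
    rw [this, ← prod_mul_distrib]
    exact prod_congr rfl fun m _ => by ring
  have h2 : ∏ m ∈ range M, (Q ^ M + (-a) * Q ^ m) =
      Q ^ (M.choose 2) * (-a) ^ M * ∏ m ∈ range M, (1 - b * Q ^ m) := by
    rw [← prod_range_reflect (fun m => 1 - b * Q ^ m)]
    have e1 : Q ^ (M.choose 2) = ∏ m ∈ range M, Q ^ m := by
      rw [prod_pow_eq_pow_sum, sum_range_id, Nat.choose_two_right]
    have e2 : (-a) ^ M = ∏ m ∈ range M, (-a) := by simp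
    rw [e1, e2, ← prod_mul_distrib, ← prod_mul_distrib]
    refine prod_congr rfl fun m hm => ?_
    obtain ⟨r, rfl⟩ := Nat.exists_eq_add_of_lt (mem_range.1 hm)
    have : m + r + 1 - 1 - m = r := by omega
    rw [this]
    linear_combination (-(Q ^ m * Q ^ r)) * hab
  rw [h1, h2, prod_mul_distrib]; ring

/-- finite Jacobi triple product -/
lemma jacobi_finite [IsDomain R] (a b Q : R) (hab : a * b = Q) (ha : Q ≠ 0) (M : ℕ) :
    ∏ m ∈ range M, ((1 - a * Q ^ m) * (1 - b * Q ^ m)) =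
      ∑ n ∈ range (M + 1), (-1) ^ n * gb Q (M + M) (M + n) * a ^ n * Q ^ (n.choose 2) +
      ∑ n ∈ range M, (-1) ^ (n + 1) * gb Q (M + M) (M - 1 - n) * b ^ (n + 1)
        * Q ^ ((n + 1).choose 2) := by
  have hne : Q ^ (M.choose 2 + M * M) * (-a) ^ M ≠ 0 := by
    have : a ≠ 0 := by rintro rfl; simp at hab; exact ha hab.symm
    exact mul_ne_zero (pow_ne_zero _ ha) (pow_ne_zero _ (neg_ne_zero.2 this))
  apply mul_left_cancel₀ hne
  rw [← prod_shift a b Q hab, gb_binomial]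
  rw [add_assoc, sum_range_add, mul_add, mul_sum, mul_sum, add_comm]
  congr 1
  · refine sum_congr rfl fun n hn => ?_
    have hn : n ≤ M := by simpa [Nat.lt_succ_iff] using hn
    obtain ⟨r, rfl⟩ := Nat.exists_eq_add_of_le hn
    have : n + r + (n + r) - (n + r + n) = r := by omega
    rw [this, choose_two_add (n + r) n, neg_pow a (n + r + n), neg_pow a (n + r)]
    ring
  · rw [← sum_range_reflect]
    refine sum_congr rfl fun n hn => ?_
    obtain ⟨r, rfl⟩ := Nat.exists_eq_add_of_lt (mem_range.1 hn)
    have e1 : n + r + 1 - 1 - n = r := by omega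
    have e2 : n + r + 1 + (n + r + 1) - r = (n + r + 1) + (n + 1) := by omega
    rw [e1, e2]
    have e3 : (n + r + 1).choose 2 = r.choose 2 + (n + 1).choose 2 + r * (n + 1) := by
      rw [← choose_two_add]; congr 1; omega
    have e4 := two_choose_two (n + 1)
    have e5 : Q ^ (n + 1) = (-a) ^ (n + 1) * ((-1) ^ (n + 1) * b ^ (n + 1)) := by
      rw [← hab, mul_pow, neg_pow a, mul_mul_mul_comm, ← mul_pow]
      ring_nf
      simp
    have e6 : Q ^ (r.choose 2) * (Q ^ (n + r + 1)) ^ (n + r + 1 + (n + 1)) =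
       Q ^ ((n + r + 1).choose 2 + (n + r + 1) * (n + r + 1)) * Q ^ ((n + 1).choose 2) * Q ^ (n + 1) := by
      rw [← pow_mul, ← pow_add, ← pow_add, ← pow_add, e3]
      congr 1
      nlinarith
    have e7 : (-a) ^ (n + r + 1) = (-a) ^ r * (-a) ^ (n + 1) := by rw [← pow_add]; congr 1; omega
    rw [e7]
    rw [e5] at e6
    linear_combination gb Q (n + r + 1 + (n + r + 1)) r * (-a) ^ r * e6

end Algebra
section Nilpotent
variable {R : Type*} [CommRing R]

lemma isUnit_T {q : R} {K : ℕ} (hq : q ^ K = 0) (N n : ℕ) : IsUnit (T q N n) := by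
  have hn : IsNilpotent q := ⟨K, hq⟩
  unfold T
  refine prod_induction _ IsUnit (fun a b ha hb => ha.mul hb) isUnit_one fun j _ => ?_
  exact (hn.pow_succ (n + j)).isUnit_one_sub

lemma T_stable {q : R} {K : ℕ} (hq : q ^ K = 0) {r : ℕ} (h : K ≤ r) : T q r 0 = T q K 0 := by
  obtain ⟨s, rfl⟩ := Nat.exists_eq_add_of_le h
  unfold T
  rw [prod_range_add, prod_eq_one (s := range s), mul_one]
  intro j _
  rw [pow_zero_of_le hq (by omega), sub_zero]

lemma gb_limit {Q : R} {K : ℕ} (hQ : Q ^ K = 0) {n r : ℕ} (hr : K ≤ r) (hn : K + r ≤ n) :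
    gb Q n r * T Q K 0 = 1 := by
  obtain ⟨s, rfl⟩ := Nat.exists_eq_add_of_le (show r ≤ n by omega)
  have h := gb_factor Q _ r s rfl
  rw [T_stable hQ hr, T_stable hQ (show K ≤ s by omega),
    T_stable hQ (show K ≤ r + s by omega)] at h
  exact (isUnit_T hQ K 0).mul_right_cancel (by rw [h, one_mul])

lemma choose_two_large {K n : ℕ} (h : 2 * K < n) : K ≤ n.choose 2 := by
  have := two_choose_two n
  nlinarith

/-- base case for the recursion -/
lemma A_base {q : R} {K L k i : ℕ} (hq : q ^ K = 0) (hL : 0 < L) (hi : 1 ≤ i) (hik : i ≤ k) :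
    A q L k K i = T q K 0 := by
  unfold A
  rw [sum_eq_single 0]
  · have : q ^ ((K + 2 * 0 + 1) * i) = 0 := pow_zero_of_le hq (by nlinarith)
    rw [this]; simp
  · intro n _ hn
    have : q ^ (k * K * n + (2 * k + 1) * n.choose 2 + (2 * k + 1 - i) * n) = 0 := by
      apply pow_zero_of_le hq
      have h1 : 1 * K * 1 ≤ k * K * n :=
        Nat.mul_le_mul (Nat.mul_le_mul_right _ (by omega)) (by omega)
      omega
    rw [this]; simp
  · intro h; simp at h; omega

/-- the recursion determines the solution -/
lemma rec_unique {q : R} {K L k : ℕ} (hq : q ^ K = 0) (hL : 0 < L) (hKL : K ≤ L)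
    (F : ℕ → ℕ → R) (h0 : ∀ N, F N 0 = 0)
    (hs : ∀ N i, i + 1 ≤ k → F N (i + 1) = F N i + q ^ ((N + 1) * i) * F (N + 1) (k - i))
    (hb : ∀ i, 1 ≤ i → F K i = 1) :
    ∀ d N, N + d = K → ∀ i, i ≤ k → T q K 0 * F N i = A q L k N i := by
  have hq' : q ^ L = 0 := pow_zero_of_le hq hKL
  intro d
  induction d with
  | zero =>
    intro N hN i hi
    obtain rfl : N = K := by omega
    rcases Nat.eq_zero_or_pos i with rfl | h
    · rw [h0, A_zero, mul_zero]
    · rw [hb i h, A_base hq hL h hi, mul_one]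
  | succ d ih =>
    intro N hN i
    induction i with
    | zero => intro _; rw [h0, A_zero, mul_zero]
    | succ i ih2 =>
      intro hi
      rw [hs N i hi, A_succ q L k N i hq' hi, ← ih2 (by omega),
        ← ih (N + 1) (by omega) (k - i) (by omega)]
      ring

/-- Jacobi's triple product modulo `q ^ K`, given the finite form. -/
lemma jacobi_limit {q : R} {K k i : ℕ} (hq : q ^ K = 0) (hK : 0 < K) (hi : 1 ≤ i) (hik : i ≤ k)
    (a b Q : R) (ha : a = q ^ i) (hb : b = q ^ (2 * k + 1 - i)) (hQ : Q = q ^ (2 * k + 1))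
    (M : ℕ) (hM : M = 3 * K)
    (hfin : ∏ m ∈ range M, ((1 - a * Q ^ m) * (1 - b * Q ^ m)) =
      ∑ n ∈ range (M + 1), (-1) ^ n * gb Q (M + M) (M + n) * a ^ n * Q ^ (n.choose 2) +
      ∑ n ∈ range M, (-1) ^ (n + 1) * gb Q (M + M) (M - 1 - n) * b ^ (n + 1)
        * Q ^ ((n + 1).choose 2)) :
    T Q K 0 * ∏ m ∈ range M, ((1 - a * Q ^ m) * (1 - b * Q ^ m)) = A q M k 0 i := by
  have hQK : Q ^ K = 0 := by
    rw [hQ, ← pow_mul]; exact pow_zero_of_le hq (by nlinarith)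
  have hab : a * b = Q := by
    rw [ha, hb, hQ, ← pow_add]; congr 1; omega
  have h1 : T Q K 0 * ∑ n ∈ range (M + 1),
      (-1) ^ n * gb Q (M + M) (M + n) * a ^ n * Q ^ (n.choose 2) =
      ∑ n ∈ range (M + 1), (-1) ^ n * a ^ n * Q ^ (n.choose 2) := by
    rw [mul_sum]
    refine sum_congr rfl fun n hn => ?_
    rcases le_or_gt n (2 * K) with h | h
    · have := gb_limit hQK (show K ≤ M + n by omega) (show K + (M + n) ≤ M + M by omega)
      linear_combination (-1) ^ n * a ^ n * Q ^ (n.choose 2) * this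
    · rw [pow_zero_of_le hQK (choose_two_large h)]; ring
  have h2 : T Q K 0 * ∑ n ∈ range M, (-1) ^ (n + 1) * gb Q (M + M) (M - 1 - n) * b ^ (n + 1)
        * Q ^ ((n + 1).choose 2) =
      ∑ n ∈ range M, (-1) ^ (n + 1) * b ^ (n + 1) * Q ^ ((n + 1).choose 2) := by
    rw [mul_sum]
    refine sum_congr rfl fun n hn => ?_
    rcases le_or_gt (n + 1) (2 * K) with h | h
    · have := gb_limit hQK (show K ≤ M - 1 - n by omega) (show K + (M - 1 - n) ≤ M + M by omega)
      linear_combination (-1) ^ (n + 1) * b ^ (n + 1) * Q ^ ((n + 1).choose 2) * this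
    · rw [pow_zero_of_le hQK (choose_two_large h)]; ring
  rw [hfin, mul_add, h1, h2, sum_range_succ' _ M]
  have h3 : ∑ n ∈ range M, (-1) ^ (n + 1) * b ^ (n + 1) * Q ^ ((n + 1).choose 2) + 1 =
      ∑ n ∈ range M, (-1) ^ n * b ^ n * Q ^ (n.choose 2) := by
    have e := sum_range_succ (fun n => (-1) ^ n * b ^ n * Q ^ (n.choose 2)) M
    rw [sum_range_succ'] at e
    have hbM : b ^ M = 0 := by
      rw [hb, ← pow_mul]
      apply pow_zero_of_le hq
      have : 1 * M ≤ (2 * k + 1 - i) * M := Nat.mul_le_mul_right _ (by omega)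
      omega
    rw [hbM] at e
    simpa using e
  have h4 : A q M k 0 i = ∑ n ∈ range M, (-1) ^ n * b ^ n * Q ^ (n.choose 2) +
      ∑ n ∈ range M, (-1) ^ (n + 1) * a ^ (n + 1) * Q ^ ((n + 1).choose 2) := by
    unfold A
    rw [← sum_add_distrib]
    refine sum_congr rfl fun n _ => ?_
    have e1 : q ^ (k * 0 * n + (2 * k + 1) * n.choose 2 + (2 * k + 1 - i) * n) =
        Q ^ (n.choose 2) * b ^ n := by
      rw [hQ, hb, ← pow_mul, ← pow_mul, ← pow_add]; congr 1; ring
    have e2 : q ^ ((0 + 2 * n + 1) * i) = a ^ n * a ^ (n + 1) := by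
      rw [ha, ← pow_mul, ← pow_mul, ← pow_add]; congr 1; ring
    have e3 : Q ^ n = a ^ n * b ^ n := by rw [← hab, mul_pow]
    rw [e1, e2, choose_two_succ, pow_add Q, e3]
    simp only [T, range_zero, prod_empty]
    ring
  rw [h4, ← h3]
  simp
  ring

/-- predicate for excluded residues (part `j + 1`) -/
def bad (k i j : ℕ) : Prop :=
  (j + 1) % (2 * k + 1) = 0 ∨ (j + 1) % (2 * k + 1) = i ∨ (j + 1) % (2 * k + 1) = 2 * k + 1 - i

open Classical in
lemma bad_prod (q : R) (k i : ℕ) (hi : 1 ≤ i) (hik : i ≤ k) (M : ℕ) :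
    ∏ j ∈ range ((2 * k + 1) * M), (if bad k i j then 1 - q ^ (j + 1) else 1) =
    T (q ^ (2 * k + 1)) M 0 * ∏ m ∈ range M, ((1 - q ^ i * (q ^ (2 * k + 1)) ^ m) *
      (1 - q ^ (2 * k + 1 - i) * (q ^ (2 * k + 1)) ^ m)) := by
  induction M with
  | zero => simp [T]
  | succ M ih =>
    rw [mul_add, mul_one, prod_range_add, ih, T_succ, prod_range_succ _ M]
    have hblock : ∏ r ∈ range (2 * k + 1), (if bad k i ((2 * k + 1) * M + r) then
        1 - q ^ ((2 * k + 1) * M + r + 1) else 1) =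
        ∏ r ∈ ({i - 1, 2 * k - i, 2 * k} : Finset ℕ), (1 - q ^ ((2 * k + 1) * M + r + 1)) := by
      rw [← prod_filter]
      congr 1
      ext r
      simp only [mem_filter, mem_range, mem_insert, mem_singleton, bad, add_assoc,
        Nat.mul_add_mod]
      constructor
      · rintro ⟨h1, h2⟩
        rcases Nat.lt_or_ge (r + 1) (2 * k + 1) with h | h
        · rw [Nat.mod_eq_of_lt h] at h2; omega
        · omega
      · rintro (rfl | rfl | rfl)
        · rw [Nat.mod_eq_of_lt (by omega)]; omega
        · rw [Nat.mod_eq_of_lt (by omega)]; omega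
        · simp
    rw [hblock, prod_insert (by simp; omega), prod_insert (by simp; omega), prod_singleton]
    have e1 : (2 * k + 1) * M + (i - 1) + 1 = i + (2 * k + 1) * M := by omega
    have e2 : (2 * k + 1) * M + (2 * k - i) + 1 = (2 * k + 1 - i) + (2 * k + 1) * M := by omega
    have e3 : (2 * k + 1) * M + 2 * k + 1 = (2 * k + 1) * (0 + M + 1) := by ring
    rw [e1, e2, e3, pow_add, pow_add, pow_mul, pow_mul]
    ring

end Nilpotent

section Count
open PowerSeries

/-- generating function of partitions whose multiset of parts satisfies `S` -/
noncomputable def gf (S : Multiset ℕ → Prop) : ℤ⟦X⟧ :=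
  PowerSeries.mk fun n => (Nat.card {π : n.Partition // S π.parts} : ℤ)

lemma gf_congr {S T : Multiset ℕ → Prop} (h : ∀ s, (∀ x ∈ s, 0 < x) → (S s ↔ T s)) :
    gf S = gf T := by
  ext n
  simp only [gf, coeff_mk]
  congr 1
  exact Nat.card_congr (Equiv.subtypeEquivRight fun π => h _ fun x hx => π.parts_pos hx)

lemma gf_false {S : Multiset ℕ → Prop} (h : ∀ s, ¬ S s) : gf S = 0 := by
  ext n
  simp [gf, h]

lemma gf_or {S T : Multiset ℕ → Prop} (h : ∀ s, S s → ¬ T s) :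
    gf (fun s => S s ∨ T s) = gf S + gf T := by
  classical
  ext n
  simp only [gf, coeff_mk, map_add]
  rw [← Nat.cast_add, ← Nat.card_sum]
  congr 1
  refine Nat.card_congr (subtypeOrEquiv _ _ ?_)
  rw [Pi.disjoint_iff]
  intro π
  simp only [Prop.disjoint_iff]
  exact fun ⟨h1, h2⟩ => h _ h1 h2

lemma gf_shift {S T : Multiset ℕ → Prop} (t : Multiset ℕ) (ht : ∀ x ∈ t, 0 < x)
    (h1 : ∀ s, S s → t ≤ s) (h2 : ∀ s, (∀ x ∈ s, 0 < x) → (S (t + s) ↔ T s)) :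
    gf S = X ^ t.sum * gf T := by
  ext n
  rw [coeff_X_pow_mul']
  simp only [gf, coeff_mk]
  split_ifs with h
  · congr 1
    refine Nat.card_congr
      { toFun := fun π => ⟨⟨π.1.parts - t, ?_, ?_⟩, ?_⟩
        invFun := fun π => ⟨⟨t + π.1.parts, ?_, ?_⟩, ?_⟩
        left_inv := ?_
        right_inv := ?_ }
    · intro i hi
      exact π.1.parts_pos (Multiset.mem_of_le (Multiset.sub_le_self _ _) hi)
    · have := congrArg Multiset.sum (add_tsub_cancel_of_le (h1 _ π.2))
      rw [Multiset.sum_add, π.1.parts_sum] at this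
      omega
    · rw [← h2 _ (fun x hx => π.1.parts_pos (Multiset.mem_of_le (Multiset.sub_le_self _ _) hx)),
        add_tsub_cancel_of_le (h1 _ π.2)]
      exact π.2
    · intro i hi
      rcases Multiset.mem_add.1 hi with hi | hi
      · exact ht _ hi
      · exact π.1.parts_pos hi
    · rw [Multiset.sum_add, π.1.parts_sum]; omega
    · exact (h2 _ fun x hx => π.1.parts_pos hx).2 π.2
    · intro π
      ext1; ext1
      exact add_tsub_cancel_of_le (h1 _ π.2)
    · intro π
      ext1; ext1
      exact add_tsub_cancel_left _ _
  · have : IsEmpty {π : n.Partition // S π.parts} := by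
      refine ⟨fun π => h ?_⟩
      have := congrArg Multiset.sum (add_tsub_cancel_of_le (h1 _ π.2))
      rw [Multiset.sum_add, π.1.parts_sum] at this
      omega
    simp

lemma gf_one {S : Multiset ℕ → Prop} (K : ℕ) (h0 : S 0) (h : ∀ s, S s → ∀ x ∈ s, K ≤ x) :
    (X : ℤ⟦X⟧) ^ K ∣ gf S - 1 := by
  rw [X_pow_dvd_iff]
  intro n hn
  rw [map_sub, gf, coeff_mk, coeff_one]
  split_ifs with hn0
  · subst hn0
    have : Nat.card {π : Nat.Partition 0 // S π.parts} = 1 := by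
      rw [Nat.card_eq_one_iff_unique]
      exact ⟨inferInstance, ⟨⟨default, by simpa using h0⟩⟩⟩
    rw [this]; simp
  · have : IsEmpty {π : n.Partition // S π.parts} := by
      refine ⟨fun π => hn0 ?_⟩
      have h3 : π.1.parts = 0 := by
        apply Multiset.eq_zero_of_forall_notMem
        intro x hx
        have h1 := h _ π.2 x hx
        have h2 := π.1.le_of_mem_parts hx
        omega
      have := π.1.parts_sum
      rw [h3] at this
      simpa using this.symm
    simp

/-- Gordon's condition for parts larger than `N` -/
def Gor (k N i : ℕ) (s : Multiset ℕ) : Prop :=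
  (∀ x ∈ s, N < x) ∧ s.count (N + 1) < i ∧ ∀ j, 1 ≤ j → s.count j + s.count (j + 1) ≤ k - 1

lemma gor_zero (k N : ℕ) : gf (Gor k N 0) = 0 := gf_false fun s h => by
  have := h.2.1; omega

lemma gor_succ (k N i : ℕ) (hi : i + 1 ≤ k) :
    gf (Gor k N (i + 1)) = gf (Gor k N i) + X ^ ((N + 1) * i) * gf (Gor k (N + 1) (k - i)) := by
  have e : (N + 1) * i = (Multiset.replicate i (N + 1)).sum := by simp [mul_comm]
  rw [e, ← gf_shift (S := fun s => Gor k N (i + 1) s ∧ s.count (N + 1) = i), ← gf_or]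
  · refine gf_congr fun s _ => ?_
    unfold Gor
    constructor
    · rintro ⟨h1, h2, h3⟩
      by_cases h : s.count (N + 1) = i
      · exact Or.inr ⟨⟨h1, h2, h3⟩, h⟩
      · exact Or.inl ⟨h1, by omega, h3⟩
    · rintro (⟨h1, h2, h3⟩ | ⟨h, _⟩)
      · exact ⟨h1, by omega, h3⟩
      · exact h
  · rintro s ⟨_, h, _⟩ ⟨_, h'⟩; omega
  · intro x hx
    rw [Multiset.eq_of_mem_replicate hx]; omega
  · rintro s ⟨_, h⟩
    rw [← Multiset.le_count_iff_replicate_le]; omega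
  · intro s hs
    unfold Gor
    simp only [Multiset.count_add, Multiset.count_replicate, Multiset.mem_add]
    constructor
    · rintro ⟨⟨h1, h2, h3⟩, h4⟩
      have h5 : s.count (N + 1) = 0 := by simpa using h4
      refine ⟨fun x hx => ?_, ?_, fun j hj => ?_⟩
      · have := h1 x (Or.inr hx)
        rcases Nat.lt_or_ge (N + 1) x with h | h
        · exact h
        · have : x = N + 1 := by omega
          subst this
          exact absurd hx (Multiset.count_eq_zero.1 h5)
      · have := h3 (N + 1) (by omega)
        simp at this
        omega
      · have := h3 j hj
        omega
    · rintro ⟨h1, h2, h3⟩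
      have hz : ∀ y, y ≤ N + 1 → s.count y = 0 := fun y hy =>
        Multiset.count_eq_zero.2 fun hm => by have := h1 y hm; omega
      refine ⟨⟨?_, ?_, ?_⟩, ?_⟩
      · rintro x (hx | hx)
        · rw [Multiset.eq_of_mem_replicate hx]; omega
        · have := h1 x hx; omega
      · rw [hz _ le_rfl]; simp
      · intro j hj
        have := h3 j hj
        rcases lt_trichotomy j N with h | rfl | h
        · rw [if_neg (by omega), if_neg (by omega)]; omega
        · rw [if_neg (by omega), if_pos rfl, hz _ le_rfl, hz j (by omega)]; omega
        · by_cases hj' : j = N + 1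
          · subst hj'
            rw [if_pos rfl, if_neg (by omega), hz _ le_rfl]
            omega
          · rw [if_neg (by omega), if_neg (by omega)]; omega
      · rw [hz _ le_rfl]; simp

/-- restricted partitions with parts larger than `N` -/
def Res (p : ℕ → Prop) (N : ℕ) (s : Multiset ℕ) : Prop := ∀ x ∈ s, N < x ∧ p x

lemma res_succ_neg (p : ℕ → Prop) (N : ℕ) (h : ¬ p (N + 1)) :
    gf (Res p (N + 1)) = gf (Res p N) := by
  refine gf_congr fun s _ => ?_
  refine forall₂_congr fun x _ => ?_
  constructor
  · rintro ⟨h1, h2⟩; exact ⟨by omega, h2⟩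
  · rintro ⟨h1, h2⟩
    refine ⟨?_, h2⟩
    rcases Nat.lt_or_ge (N + 1) x with h' | h'
    · exact h'
    · have : x = N + 1 := by omega
      subst this; exact absurd h2 h

lemma res_succ_pos (p : ℕ → Prop) (N : ℕ) (h : p (N + 1)) :
    gf (Res p N) = gf (Res p (N + 1)) + X ^ (N + 1) * gf (Res p N) := by
  have e : N + 1 = ({N + 1} : Multiset ℕ).sum := by simp
  conv_rhs => rw [e, ← gf_shift (S := fun s => Res p N s ∧ N + 1 ∈ s) (T := Res p N) {N + 1}
    (by simp) (by rintro s ⟨_, h⟩; simpa using h) (by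
      intro s _
      constructor
      · rintro ⟨h1, _⟩ x hx
        exact h1 x (by simp [hx])
      · intro h1
        refine ⟨fun x hx => ?_, by simp⟩
        rcases Multiset.mem_add.1 hx with hx | hx
        · rw [Multiset.mem_singleton] at hx
          subst hx; exact ⟨by omega, h⟩
        · exact h1 x hx)]
  have e' : ({N + 1} : Multiset ℕ).sum = N + 1 := by simp
  rw [e', ← gf_or]
  · refine gf_congr fun s _ => ?_
    constructor
    · intro h1
      by_cases hm : N + 1 ∈ s
      · exact Or.inr ⟨h1, hm⟩
      · refine Or.inl fun x hx => ⟨?_, (h1 x hx).2⟩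
        have := (h1 x hx).1
        rcases Nat.lt_or_ge (N + 1) x with h' | h'
        · exact h'
        · have : x = N + 1 := by omega
          subst this; exact absurd hx hm
    · rintro (h1 | ⟨h1, _⟩)
      · exact fun x hx => ⟨by have := (h1 x hx).1; omega, (h1 x hx).2⟩
      · exact h1
  · rintro s h1 ⟨_, h2⟩
    have := (h1 _ h2).1
    omega

end Count

section Main
open PowerSeries

lemma main_eq (k i : ℕ) (hi : 1 ≤ i) (hik : i ≤ k) (K : ℕ) (hK : 0 < K) :
    (X : ℤ⟦X⟧) ^ K ∣ gf (Gor k 0 i) - gf (Res (fun x => ¬ bad k i (x - 1)) 0) := by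
  classical
  set p : ℕ → Prop := fun x => ¬ bad k i (x - 1) with hp
  let I : Ideal ℤ⟦X⟧ := Ideal.span {X ^ K}
  let φ : ℤ⟦X⟧ →+* ℤ⟦X⟧ ⧸ I := Ideal.Quotient.mk I
  have hφ : ∀ f g, φ f = φ g ↔ (X : ℤ⟦X⟧) ^ K ∣ f - g := fun f g => by
    rw [Ideal.Quotient.eq, Ideal.mem_span_singleton]
  rw [← hφ]
  obtain ⟨q, hqX⟩ : ∃ q, q = φ X := ⟨_, rfl⟩
  have hq : q ^ K = 0 := by
    rw [hqX, ← map_pow, ← map_zero φ, hφ]; simp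
  set M := 3 * K with hM
  -- Gordon side
  have hG : T q K 0 * φ (gf (Gor k 0 i)) = A q M k 0 i := by
    refine rec_unique hq (by omega) (by omega) (fun N i => φ (gf (Gor k N i))) ?_ ?_ ?_ K 0
      (by omega) i hik
    · intro N; simp [gor_zero]
    · intro N i hi
      simp only [gor_succ k N i hi, map_add, map_mul, map_pow, hqX]
    · intro i hi
      rw [← map_one φ, hφ]
      exact gf_one K ⟨by simp, by simp; omega, by simp⟩ fun s hs x hx => (hs.1 x hx).le
  -- Jacobi
  have hJ : T (q ^ (2 * k + 1)) K 0 * ∏ m ∈ range M, ((1 - q ^ i * (q ^ (2 * k + 1)) ^ m) *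
      (1 - q ^ (2 * k + 1 - i) * (q ^ (2 * k + 1)) ^ m)) = A q M k 0 i := by
    refine jacobi_limit hq hK hi hik _ _ _ rfl rfl rfl M hM ?_
    have hf := jacobi_finite ((X : ℤ⟦X⟧) ^ i) (X ^ (2 * k + 1 - i)) (X ^ (2 * k + 1))
      (by rw [← pow_add]; congr 1; omega) (pow_ne_zero _ X_ne_zero) M
    have hgb : ∀ n j, φ (gb ((X : ℤ⟦X⟧) ^ (2 * k + 1)) n j) = gb (q ^ (2 * k + 1)) n j := by
      intro n
      induction n with
      | zero => intro j; cases j <;> simp [gb]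
      | succ n ih => intro j; cases j <;> simp [gb, ih, hqX]
    have := congrArg φ hf
    simp only [map_prod, map_sum, map_mul, map_add, map_sub, map_pow, map_one, map_neg, hgb,
      ← hqX] at this
    exact this
  -- product side
  have hD : ∀ J, φ (gf (Res p J)) =
      (∏ j ∈ range J, (if bad k i j then 1 else 1 - q ^ (j + 1))) * φ (gf (Res p 0)) := by
    intro J
    induction J with
    | zero => simp
    | succ J ih =>
      rw [prod_range_succ]
      by_cases hb : bad k i J
      · rw [res_succ_neg p J (by simpa [hp] using hb), ih, if_pos hb, mul_one]
      · have h := congrArg φ (res_succ_pos p J (by simpa [hp] using hb))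
        simp only [map_add, map_mul, map_pow, ← hqX] at h
        rw [if_neg hb]
        linear_combination (1 - q ^ (J + 1)) * ih - h
  have hWM : K ≤ (2 * k + 1) * M := by nlinarith
  have hD1 := hD ((2 * k + 1) * M)
  have hone : φ (gf (Res p ((2 * k + 1) * M))) = 1 := by
    rw [← map_one φ, hφ]
    exact gf_one K (by simp [Res]) fun s hs x hx => by have := (hs x hx).1; omega
  rw [hone] at hD1
  have hsplit : T q K 0 = (∏ j ∈ range ((2 * k + 1) * M), (if bad k i j then 1 else 1 - q ^ (j + 1)))
      * ∏ j ∈ range ((2 * k + 1) * M), (if bad k i j then 1 - q ^ (j + 1) else 1) := by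
    rw [← T_stable hq hWM, ← prod_mul_distrib, T]
    refine prod_congr rfl fun j _ => ?_
    split_ifs <;> simp
  have hQ : (q ^ (2 * k + 1)) ^ K = 0 := by
    rw [← pow_mul]; exact pow_zero_of_le hq (by nlinarith)
  have hbad := bad_prod q k i hi hik M
  rw [T_stable hQ (show K ≤ M by omega), hJ] at hbad
  apply (isUnit_T hq K 0).mul_left_cancel
  rw [hG, hsplit, hbad]
  linear_combination A q M k 0 i * hD1

end Main
end GordonProof

/-- Gordon's theorem: for `1 ≤ i ≤ k`, the number of partitions of `n` in which `1` appears at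
most `i - 1` times and `j` and `j + 1` together appear at most `k - 1` times for every `j ≥ 1`
equals the number of partitions of `n` into parts not congruent to `0, ±i (mod 2k+1)`. -/
theorem gordon (k i : ℕ) (hi : 1 ≤ i) (hik : i ≤ k) (n : ℕ) :
    Nat.card {π : n.Partition //
        π.parts.count 1 ≤ i - 1 ∧
        (∀ j, 1 ≤ j → π.parts.count j + π.parts.count (j + 1) ≤ k - 1)} =
      Nat.card {π : n.Partition //
        ∀ j ∈ π.parts, j % (2 * k + 1) ≠ 0 ∧ j % (2 * k + 1) ≠ i ∧
          j % (2 * k + 1) ≠ 2 * k + 1 - i} := by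
  classical
  have h := GordonProof.main_eq k i hi hik (n + 1) (by omega)
  rw [PowerSeries.X_pow_dvd_iff] at h
  have h := h n (by omega)
  rw [map_sub, sub_eq_zero, GordonProof.gf, GordonProof.gf, PowerSeries.coeff_mk,
    PowerSeries.coeff_mk, Nat.cast_inj] at h
  convert h using 1
  · refine Nat.card_congr (Equiv.subtypeEquivRight fun π => ?_)
    unfold GordonProof.Gor
    constructor
    · rintro ⟨h1, h2⟩
      exact ⟨fun x hx => π.parts_pos hx, by simp only [zero_add]; omega, h2⟩
    · rintro ⟨_, h1, h2⟩
      simp only [zero_add] at h1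
      exact ⟨by omega, h2⟩
  · refine Nat.card_congr (Equiv.subtypeEquivRight fun π => ?_)
    unfold GordonProof.Res GordonProof.bad
    refine forall₂_congr fun x hx => ?_
    have hx0 : 0 < x := π.parts_pos hx
    have e : x - 1 + 1 = x := by omega
    simp only [e, not_or, hx0, true_and]
end

section
/- For every natural number n, the number of partitions of n such that, if 2j denotes the largest repeated part (which is necessarily even), then every positive even integer less than 2j appears at least twice, no odd part less than 2j+2 appears at all, each odd part appears at most once, and no part greater than 2j is repeated, equals the number of partitions of n into parts none of which is congruent to 0, 1, or −1 modulo 7. -/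
/-- The largest repeated part of a partition (`0` if no part is repeated). -/
def largestRepeatedPart {n : ℕ} (π : n.Partition) : ℕ :=
  (π.parts.toFinset.filter (fun j => 2 ≤ π.parts.count j)).sup id

section RSField

variable {K : Type*} [Field K]

/-- reciprocal of the q-Pochhammer symbol, extended by zero to negative indices -/
noncomputable def RSip (Q : K) (k : ℤ) : K :=
  if k < 0 then 0 else (∏ j ∈ Finset.range k.toNat, (1 - Q ^ (j + 1)))⁻¹

lemma RSip_neg (Q : K) {k : ℤ} (hk : k < 0) : RSip Q k = 0 := by simp [RSip, hk]

lemma RSip_zero (Q : K) : RSip Q 0 = 1 := by simp [RSip]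

lemma RSip_nat (Q : K) (k : ℕ) :
    RSip Q (k : ℤ) = (∏ j ∈ Finset.range k, (1 - Q ^ (j + 1)))⁻¹ := by
  simp [RSip]

lemma RSip_pred (Q : K) (hQ : ∀ j : ℕ, Q ^ (j + 1) ≠ 1) (k : ℤ) :
    RSip Q (k - 1) = (1 - Q ^ k) * RSip Q k := by
  rcases lt_trichotomy k 0 with h | h | h
  · rw [RSip_neg Q h, RSip_neg Q (by omega), mul_zero]
  · subst h; rw [RSip_neg Q (by omega)]; simp
  · obtain ⟨n, rfl⟩ : ∃ n : ℕ, k = ((n + 1 : ℕ) : ℤ) := ⟨(k - 1).toNat, by omega⟩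
    rw [show (((n + 1 : ℕ) : ℤ) - 1) = (n : ℤ) by push_cast; ring, RSip_nat, RSip_nat,
      Finset.prod_range_succ, mul_inv, zpow_natCast]
    have : (1 - Q ^ (n + 1)) ≠ 0 := sub_ne_zero.mpr (hQ n).symm
    field_simp

/-- bilateral sums against two reciprocal Pochhammers -/
noncomputable def RST (Q : K) (a b : ℤ) (w : ℤ → K) : K :=
  ∑ᶠ r : ℤ, w r * RSip Q (a - r) * RSip Q (b + r)

lemma RST_fin (Q : K) (a b c d : ℤ) (w : ℤ → K) (hc : a ≤ c) (hd : b ≤ d) :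
    (Function.HasFiniteSupport fun r : ℤ => w r * RSip Q (a - r) * RSip Q (b + r)) := by
  refine (Set.finite_Icc (-d) c).subset ?_
  intro r hr
  simp only [Function.mem_support, ne_eq] at hr
  constructor
  · by_contra h; exact hr (by rw [RSip_neg Q (k := b + r) (by omega), mul_zero])
  · by_contra h; exact hr (by rw [RSip_neg Q (k := a - r) (by omega), mul_zero, zero_mul])

lemma RST_eq_sum (Q : K) (a b c d : ℤ) (w : ℤ → K) (hc : a ≤ c) (hd : b ≤ d) :
    RST Q a b w = ∑ r ∈ Finset.Icc (-d) c, w r * RSip Q (a - r) * RSip Q (b + r) := by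
  apply finsum_eq_sum_of_support_subset
  intro r hr
  simp only [Function.mem_support, ne_eq] at hr
  simp only [Finset.coe_Icc, Set.mem_Icc]
  constructor
  · by_contra h; exact hr (by rw [RSip_neg Q (k := b + r) (by omega), mul_zero])
  · by_contra h; exact hr (by rw [RSip_neg Q (k := a - r) (by omega), mul_zero, zero_mul])

lemma RST_smul (Q : K) (a b : ℤ) (c : K) (w : ℤ → K) :
    RST Q a b (fun r => c * w r) = c * RST Q a b w := by
  unfold RST
  rw [mul_finsum]
  refine finsum_congr fun r => by ring

lemma RST_pascal1 (Q : K) (hQ0 : Q ≠ 0) (hQ : ∀ j : ℕ, Q ^ (j + 1) ≠ 1) (a b : ℤ) (w : ℤ → K) :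
    (1 - Q ^ (a + b + 1)) * RST Q a (b + 1) w
      = RST Q a b w + Q ^ b * RST Q a b (fun s => w (s - 1) * Q ^ s) := by
  have h2 : Q ^ b * RST Q a b (fun s => w (s - 1) * Q ^ s)
      = ∑ᶠ r : ℤ, (Q ^ (b + 1 + r) * w r) * RSip Q (a - 1 - r) * RSip Q (b + 1 + r) := by
    unfold RST
    rw [mul_finsum, ← finsum_comp_equiv (Equiv.addRight (1 : ℤ))]
    refine finsum_congr fun r => ?_
    simp only [Equiv.coe_addRight]
    rw [show r + 1 - 1 = r by ring, show a - (r + 1) = a - 1 - r by ring,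
      show b + (r + 1) = b + 1 + r by ring, show b + 1 + r = b + (r + 1) by ring,
      zpow_add₀ hQ0 b]
    ring
  rw [h2]
  unfold RST
  rw [mul_finsum, ← finsum_add_distrib (RST_fin Q a b a b w le_rfl le_rfl)
    (RST_fin Q (a - 1) (b + 1) _ _ (fun r => Q ^ (b + 1 + r) * w r) le_rfl le_rfl)]
  refine finsum_congr fun r => ?_
  have e1 := RSip_pred Q hQ (a - r)
  have e2 := RSip_pred Q hQ (b + 1 + r)
  rw [show a - r - 1 = a - 1 - r by ring] at e1
  rw [show b + 1 + r - 1 = b + r by ring] at e2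
  rw [e1, e2, show a + b + 1 = (a - r) + (b + 1 + r) by ring, zpow_add₀ hQ0 (a - r)]
  ring

lemma RST_pascal2 (Q : K) (hQ0 : Q ≠ 0) (hQ : ∀ j : ℕ, Q ^ (j + 1) ≠ 1) (a b : ℤ) (w : ℤ → K) :
    (1 - Q ^ (a + b + 1)) * RST Q (a + 1) b w
      = RST Q a b w + Q ^ a * RST Q a b (fun s => w (s + 1) * Q ^ (-s)) := by
  have h2 : Q ^ a * RST Q a b (fun s => w (s + 1) * Q ^ (-s))
      = ∑ᶠ r : ℤ, (Q ^ (a + 1 - r) * w r) * RSip Q (a + 1 - r) * RSip Q (b - 1 + r) := by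
    unfold RST
    rw [mul_finsum, ← finsum_comp_equiv (Equiv.subRight (1 : ℤ))]
    refine finsum_congr fun r => ?_
    simp only [Equiv.subRight_apply]
    rw [show r - 1 + 1 = r by ring, show a - (r - 1) = a + 1 - r by ring,
      show b + (r - 1) = b - 1 + r by ring, show a + 1 - r = a + (-(r - 1)) by ring,
      zpow_add₀ hQ0 a]
    ring
  rw [h2]
  unfold RST
  rw [mul_finsum, ← finsum_add_distrib (RST_fin Q a b a b w le_rfl le_rfl)
    (RST_fin Q (a + 1) (b - 1) _ _ (fun r => Q ^ (a + 1 - r) * w r) le_rfl le_rfl)]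
  refine finsum_congr fun r => ?_
  have e1 := RSip_pred Q hQ (a + 1 - r)
  have e2 := RSip_pred Q hQ (b + r)
  rw [show a + 1 - r - 1 = a - r by ring] at e1
  rw [show b + r - 1 = b - 1 + r by ring] at e2
  rw [e1, e2, show a + b + 1 = (a + 1 - r) + (b + r) by ring, zpow_add₀ hQ0 (a + 1 - r)]
  ring

lemma RST_refl (Q : K) (a b : ℤ) (w : ℤ → K) :
    RST Q a b (fun s => w (a - b - s)) = RST Q a b w := by
  unfold RST
  rw [← finsum_comp_equiv (Equiv.subLeft (a - b))]
  refine finsum_congr fun r => ?_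
  simp only [Equiv.subLeft_apply]
  rw [show a - b - (a - b - r) = r by ring, show a - (a - b - r) = b + r by ring,
    show b + (a - b - r) = a - r by ring]
  ring

lemma RST_zero (Q : K) (w : ℤ → K) : RST Q 0 0 w = w 0 := by
  rw [RST_eq_sum Q 0 0 0 0 w le_rfl le_rfl]
  simp [RSip_zero]

/-- the Bailey step -/
noncomputable def RSB (Q : K) (N m : ℤ) : K :=
  ∑ᶠ k : ℤ, Q ^ (k ^ 2 + k * m) * RSip Q (k + m) * RSip Q (N - k) * RSip Q k

lemma RSB_fin (Q : K) (N : ℤ) (w : ℤ → K) :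
    (Function.HasFiniteSupport fun r : ℤ => w r * RSip Q (N - r) * RSip Q r) := by
  simpa using RST_fin Q N 0 _ _ w le_rfl le_rfl

lemma RSB_succ (Q : K) (hQ0 : Q ≠ 0) (hQ : ∀ j : ℕ, Q ^ (j + 1) ≠ 1) (N m : ℤ) :
    (1 - Q ^ (N + 1)) * RSB Q (N + 1) m = RSB Q N (m + 1) := by
  have key := RST_pascal2 Q hQ0 hQ N 0 (fun k => Q ^ (k ^ 2 + k * m) * RSip Q (k + m))
  have e1 : RSB Q (N + 1) m = RST Q (N + 1) 0 (fun k => Q ^ (k ^ 2 + k * m) * RSip Q (k + m)) := by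
    unfold RSB RST; refine finsum_congr fun k => by simp
  have e2 := RST_pascal2 Q hQ0 hQ N 0 (fun k => Q ^ (k ^ 2 + k * m) * RSip Q (k + m))
  rw [e1]
  -- use the direct termwise computation
  have h2 : ∑ᶠ k : ℤ, (Q ^ ((k + 1) ^ 2 + (k + 1) * m) * RSip Q (k + 1 + m)) * RSip Q (N - k)
        * RSip Q k
      = ∑ᶠ r : ℤ, (Q ^ (r ^ 2 + r * m) * RSip Q (r + m)) * RSip Q (N + 1 - r)
        * RSip Q (-1 + r) := by
    rw [← finsum_comp_equiv (Equiv.subRight (1 : ℤ))]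
    refine finsum_congr fun r => ?_
    simp only [Equiv.subRight_apply]
    rw [show r - 1 + 1 = r by ring, show N - (r - 1) = N + 1 - r by ring,
      show -1 + r = r - 1 by ring]
  have h3 : (1 - Q ^ (N + 1)) *
      RST Q (N + 1) 0 (fun k => Q ^ (k ^ 2 + k * m) * RSip Q (k + m))
      = (∑ᶠ k : ℤ, (Q ^ (k ^ 2 + k * (m + 1)) * RSip Q (k + m)) * RSip Q (N - k) * RSip Q k)
        + ∑ᶠ k : ℤ, (Q ^ ((k + 1) ^ 2 + (k + 1) * m) * RSip Q (k + 1 + m)) * RSip Q (N - k)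
        * RSip Q k := by
    rw [h2]
    unfold RST
    rw [mul_finsum, ← finsum_add_distrib (RSB_fin Q N _)
      (RST_fin Q (N + 1) (-1) _ _ (fun r => Q ^ (r ^ 2 + r * m) * RSip Q (r + m)) le_rfl le_rfl)]
    refine finsum_congr fun k => ?_
    have e1 := RSip_pred Q hQ (N + 1 - k)
    have e2 := RSip_pred Q hQ k
    rw [show N + 1 - k - 1 = N - k by ring] at e1
    rw [show -1 + k = k - 1 by ring, e1, e2, show N + 1 = (N + 1 - k) + k by ring,
      show (N + 1 - k) + k - k = N + 1 - k by ring, zpow_add₀ hQ0 (N + 1 - k),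
      show k ^ 2 + k * (m + 1) = k ^ 2 + k * m + k by ring, zpow_add₀ hQ0 (k ^ 2 + k * m), zero_add]
    ring
  rw [h3, ← finsum_add_distrib (RSB_fin Q N _) (RSB_fin Q N _)]
  unfold RSB
  refine finsum_congr fun k => ?_
  have e1 := RSip_pred Q hQ (k + m + 1)
  rw [show k + m + 1 - 1 = k + m by ring] at e1
  rw [e1, show k + (m + 1) = k + m + 1 by ring, show k + 1 + m = k + m + 1 by ring,
    show (k + 1) ^ 2 + (k + 1) * m = (k ^ 2 + k * (m + 1)) + (k + m + 1) by ring,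
    zpow_add₀ hQ0 (k ^ 2 + k * (m + 1))]
  ring

lemma RSB_eq (Q : K) (hQ0 : Q ≠ 0) (hQ : ∀ j : ℕ, Q ^ (j + 1) ≠ 1) (N m : ℤ) :
    RSB Q N m = RSip Q N * RSip Q (N + m) := by
  rcases lt_or_ge N 0 with h | h
  · rw [RSip_neg Q h, zero_mul]
    unfold RSB
    rw [finsum_eq_zero_of_forall_eq_zero]
    intro k
    rcases lt_or_ge k 0 with hk | hk
    · rw [RSip_neg Q hk, mul_zero]
    · rw [RSip_neg Q (k := N - k) (by omega), mul_zero, zero_mul]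
  · lift N to ℕ using h
    induction N generalizing m with
    | zero =>
      have : RSB Q 0 m = RST Q 0 0 (fun k => Q ^ (k ^ 2 + k * m) * RSip Q (k + m)) := by
        unfold RSB RST; refine finsum_congr fun k => by simp
      simp [this, RST_zero, RSip_zero]
    | succ N ih =>
      have h1 := RSB_succ Q hQ0 hQ N m
      rw [ih] at h1
      have h2 := RSip_pred Q hQ ((N : ℤ) + 1)
      rw [show (N : ℤ) + 1 - 1 = N by ring] at h2
      have h3 : (1 - Q ^ ((N : ℤ) + 1)) ≠ 0 := sub_ne_zero.mpr (by exact_mod_cast (hQ N).symm)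
      push_cast
      apply mul_left_cancel₀ h3
      rw [h1, h2, show (N : ℤ) + (m + 1) = N + 1 + m by ring]
      ring

lemma RS_bailey (Q : K) (hQ0 : Q ≠ 0) (hQ : ∀ j : ℕ, Q ^ (j + 1) ≠ 1) (L : ℕ) (r : ℤ) :
    ∑ n ∈ Finset.range (L + 1), Q ^ ((n : ℤ) ^ 2 + n) * RSip Q ((L : ℤ) - n) *
      (RSip Q ((n : ℤ) - r) * RSip Q ((n : ℤ) + 1 + r))
      = Q ^ (r ^ 2 + r) * RSip Q ((L : ℤ) - r) * RSip Q ((L : ℤ) + 1 + r) := by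
  have h := RSB_eq Q hQ0 hQ (L - r) (2 * r + 1)
  rw [show (L : ℤ) - r + (2 * r + 1) = L + 1 + r by ring] at h
  rw [mul_assoc, ← h]
  unfold RSB
  rw [mul_finsum, ← finsum_comp_equiv (Equiv.subRight r),
    finsum_eq_sum_of_support_subset (s := (Finset.range (L + 1)).map Nat.castEmbedding)]
  · rw [Finset.sum_map]
    refine Finset.sum_congr rfl fun n _ => ?_
    simp only [Equiv.subRight_apply, Nat.castEmbedding_apply]
    rw [show (n : ℤ) ^ 2 + n = (r ^ 2 + r) + (((n : ℤ) - r) ^ 2 + ((n : ℤ) - r) * (2 * r + 1)) by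
      ring, zpow_add₀ hQ0 (r ^ 2 + r), show (L : ℤ) - r - (n - r) = L - n by ring,
      show (n : ℤ) - r + (2 * r + 1) = n + 1 + r by ring]
    ring
  · intro n hn
    simp only [Equiv.subRight_apply, Function.mem_support, ne_eq] at hn
    have h1 : n ≤ L := by
      by_contra hh
      apply hn
      rw [RSip_neg Q (k := (L : ℤ) - r - (n - r)) (by omega)]; ring
    have h2 : 0 ≤ n := by
      by_contra hh
      apply hn
      rcases lt_or_ge (n - r) 0 with h4 | h4
      · rw [RSip_neg Q h4]; ring
      · rw [RSip_neg Q (k := n - r + (2 * r + 1)) (by omega)]; ring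
    simp only [Finset.coe_map, Set.mem_image, Finset.coe_range, Set.mem_Iio]
    exact ⟨n.toNat, by omega, by simp [h2]⟩

lemma RS_bailey_sum (Q : K) (hQ0 : Q ≠ 0) (hQ : ∀ j : ℕ, Q ^ (j + 1) ≠ 1) (L : ℕ) (w : ℤ → K) :
    ∑ n ∈ Finset.range (L + 1), Q ^ ((n : ℤ) ^ 2 + n) * RSip Q ((L : ℤ) - n) *
      RST Q n (n + 1) w
      = RST Q L (L + 1) (fun r => w r * Q ^ (r ^ 2 + r)) := by
  rw [RST_eq_sum Q L (L + 1) L (L + 1) _ le_rfl le_rfl]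
  have : ∀ n ∈ Finset.range (L + 1), Q ^ ((n : ℤ) ^ 2 + n) * RSip Q ((L : ℤ) - n) *
      RST Q n (n + 1) w = ∑ r ∈ Finset.Icc (-((L : ℤ) + 1)) L, w r *
        (Q ^ ((n : ℤ) ^ 2 + n) * RSip Q ((L : ℤ) - n) *
      (RSip Q ((n : ℤ) - r) * RSip Q ((n : ℤ) + 1 + r))) := by
    intro n hn
    rw [Finset.mem_range] at hn
    rw [RST_eq_sum Q n (n + 1) L (L + 1) _ (by omega) (by omega), Finset.mul_sum]
    refine Finset.sum_congr rfl fun r _ => by ring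
  rw [Finset.sum_congr rfl this, Finset.sum_comm]
  refine Finset.sum_congr rfl fun r _ => ?_
  rw [← Finset.mul_sum, RS_bailey Q hQ0 hQ]
  ring

end RSField

section RSField2

lemma RS_e3 (r : ℤ) : 2 * (r * (3 * r + 1) / 2) = r * (3 * r + 1) := by
  apply Int.mul_ediv_cancel'
  rcases Int.even_or_odd r with h | h
  · exact (h.mul_right _).two_dvd
  · have : Even (3 * r + 1) := by
      obtain ⟨k, rfl⟩ := h
      exact ⟨3 * k + 2, by ring⟩
    exact (this.mul_left _).two_dvd

lemma RS_e7 (r : ℤ) : 2 * (r * (7 * r + 5) / 2) = r * (7 * r + 5) := by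
  apply Int.mul_ediv_cancel'
  rcases Int.even_or_odd r with h | h
  · exact (h.mul_right _).two_dvd
  · have : Even (7 * r + 5) := by
      obtain ⟨k, rfl⟩ := h
      exact ⟨7 * k + 6, by ring⟩
    exact (this.mul_left _).two_dvd

variable {K : Type*} [Field K] [CharZero K]

set_option linter.unusedSectionVars false

lemma RS_s1 (s : ℤ) : (-1 : K) ^ (s - 1) = -(-1) ^ s := by
  rw [zpow_sub₀ (neg_ne_zero.mpr one_ne_zero), zpow_one, div_neg, div_one]

lemma RS_s2 (s : ℤ) : (-1 : K) ^ (s + 1) = -(-1) ^ s := by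
  rw [zpow_add₀ (neg_ne_zero.mpr one_ne_zero), zpow_one, mul_neg, mul_one]

lemma RS_s3 (s : ℤ) : (-1 : K) ^ (-s) = (-1) ^ s := by
  rw [zpow_neg, ← inv_zpow]; norm_num

lemma RS_pow_ne (q : K) (hq : ∀ j : ℕ, q ^ (j + 1) ≠ 1) (d : ℕ) (hd : 0 < d) (j : ℕ) :
    (q ^ d) ^ (j + 1) ≠ 1 := by
  rw [← pow_mul]
  obtain ⟨e, rfl⟩ : ∃ e, d = e + 1 := ⟨d - 1, by omega⟩
  exact hq ((e + 1) * j + e)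

lemma RS_pent1 (q : K) (hq0 : q ≠ 0) (hq : ∀ j : ℕ, q ^ (j + 1) ≠ 1) (n : ℕ) :
    (1 - (q ^ 2) ^ ((n : ℤ) + n + 1)) *
      RST (q ^ 2) n (n + 1) (fun r => (-1) ^ r * q ^ (r * (3 * r + 1) / 2))
      = (1 - q ^ (2 * n + 1)) *
        RST (q ^ 2) n n (fun r => (-1) ^ r * q ^ (r * (3 * r + 1) / 2)) := by
  have hQ0 : q ^ 2 ≠ 0 := pow_ne_zero _ hq0
  rw [RST_pascal1 (q ^ 2) hQ0 (RS_pow_ne q hq 2 (by norm_num))]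
  have e : RST (q ^ 2) n n (fun s : ℤ => (-1) ^ (s - 1) * q ^ ((s - 1) * (3 * (s - 1) + 1) / 2)
      * (q ^ 2) ^ s)
      = (-q) * RST (q ^ 2) n n (fun r => (-1) ^ r * q ^ (r * (3 * r + 1) / 2)) := by
    rw [← RST_refl (q ^ 2) n n (fun r => (-1) ^ r * q ^ (r * (3 * r + 1) / 2)), ← RST_smul]
    congr 1
    funext s
    have h1 := RS_e3 (s - 1)
    have h2 := RS_e3 ((n : ℤ) - n - s)
    have h3 : ((s - 1) * (3 * (s - 1) + 1) / 2) + 2 * s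
      = 1 + (((n : ℤ) - n - s) * (3 * ((n : ℤ) - n - s) + 1) / 2) := by
      rw [sub_self] at *
      linarith
    have h4 : (q ^ 2) ^ s = q ^ (2 * s) := by
      rw [zpow_mul]; norm_cast
    rw [h4, mul_assoc, ← zpow_add₀ hq0, h3, zpow_add₀ hq0, zpow_one, RS_s1,
      show (n : ℤ) - n - s = -s by ring, RS_s3]
    ring
  rw [e, zpow_natCast]
  ring

lemma RS_pent2 (q : K) (hq0 : q ≠ 0) (hq : ∀ j : ℕ, q ^ (j + 1) ≠ 1) (n : ℕ) :
    (1 - (q ^ 2) ^ ((n : ℤ) + (n + 1) + 1)) *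
      RST (q ^ 2) (n + 1) (n + 1) (fun r => (-1) ^ r * q ^ (r * (3 * r + 1) / 2))
      = RST (q ^ 2) n (n + 1) (fun r => (-1) ^ r * q ^ (r * (3 * r + 1) / 2)) := by
  have hQ0 : q ^ 2 ≠ 0 := pow_ne_zero _ hq0
  rw [RST_pascal2 (q ^ 2) hQ0 (RS_pow_ne q hq 2 (by norm_num))]
  have e : RST (q ^ 2) n (n + 1) (fun s : ℤ => (-1) ^ (s + 1) *
      q ^ ((s + 1) * (3 * (s + 1) + 1) / 2) * (q ^ 2) ^ (-s)) = 0 := by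
    have e1 : RST (q ^ 2) n (n + 1) (fun s : ℤ => (-1) ^ (s + 1) *
      q ^ ((s + 1) * (3 * (s + 1) + 1) / 2) * (q ^ 2) ^ (-s)) =
      (-1) * RST (q ^ 2) n (n + 1) (fun s : ℤ => (-1) ^ (s + 1) *
      q ^ ((s + 1) * (3 * (s + 1) + 1) / 2) * (q ^ 2) ^ (-s)) := by
      conv_lhs => rw [← RST_refl, ]
      rw [← RST_smul]
      congr 1
      funext s
      have h0 : (n : ℤ) - (n + 1) - s = -1 - s := by ring
      rw [h0]
      have h1 := RS_e3 (s + 1)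
      have h2 := RS_e3 (-1 - s + 1)
      have h4 : ∀ t : ℤ, (q ^ 2) ^ t = q ^ (2 * t) := by
        intro t; rw [zpow_mul]; norm_cast
      have h3 : ((-1 - s + 1) * (3 * (-1 - s + 1) + 1) / 2) + 2 * (-(-1 - s))
        = (s + 1) * (3 * (s + 1) + 1) / 2 + 2 * (-s) := by
        linarith
      rw [h4, h4, mul_assoc, mul_assoc, ← zpow_add₀ hq0, ← zpow_add₀ hq0, h3,
        show -1 - s + 1 = -s by ring, RS_s3, RS_s2]
      ring
    have : (2 : K) * RST (q ^ 2) n (n + 1) (fun s : ℤ => (-1) ^ (s + 1) *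
      q ^ ((s + 1) * (3 * (s + 1) + 1) / 2) * (q ^ 2) ^ (-s)) = 0 := by linear_combination e1
    simpa using this
  rw [e]
  ring

lemma RS_cancel (Q : K) (hQ : ∀ j : ℕ, Q ^ (j + 1) ≠ 1) (k : ℕ) (c x : K)
    (h : (1 - Q ^ ((k : ℤ) + 1)) * x = c * RSip Q k) : x = c * RSip Q ((k : ℤ) + 1) := by
  have h2 := RSip_pred Q hQ ((k : ℤ) + 1)
  rw [show (k : ℤ) + 1 - 1 = k by ring] at h2
  have h3 : (1 - Q ^ ((k : ℤ) + 1)) ≠ 0 := sub_ne_zero.mpr (by exact_mod_cast (hQ k).symm)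
  apply mul_left_cancel₀ h3
  rw [h, h2]; ring

lemma RS_pent (q : K) (hq0 : q ≠ 0) (hq : ∀ j : ℕ, q ^ (j + 1) ≠ 1) (n : ℕ) :
    RST (q ^ 2) n (n + 1) (fun r => (-1) ^ r * q ^ (r * (3 * r + 1) / 2))
      = (∏ j ∈ Finset.range (n + 1), (1 - q ^ (2 * j + 1))) *
        RSip (q ^ 2) ((2 * n + 1 : ℕ) : ℤ) := by
  have hQ := RS_pow_ne q hq 2 (by norm_num)
  have step : ∀ n : ℕ, RST (q ^ 2) n n (fun r => (-1) ^ r * q ^ (r * (3 * r + 1) / 2))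
      = (∏ j ∈ Finset.range n, (1 - q ^ (2 * j + 1))) * RSip (q ^ 2) ((2 * n : ℕ) : ℤ) →
    RST (q ^ 2) n (n + 1) (fun r => (-1) ^ r * q ^ (r * (3 * r + 1) / 2))
      = (∏ j ∈ Finset.range (n + 1), (1 - q ^ (2 * j + 1))) *
        RSip (q ^ 2) ((2 * n + 1 : ℕ) : ℤ) := by
    intro n h
    have h1 := RS_pent1 q hq0 hq n
    rw [h, ← mul_assoc] at h1
    rw [show (n : ℤ) + n + 1 = ((2 * n : ℕ) : ℤ) + 1 by push_cast; ring] at h1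
    rw [RS_cancel _ hQ _ _ _ h1, Finset.prod_range_succ]
    push_cast
    ring
  have main : ∀ n : ℕ, RST (q ^ 2) n n (fun r => (-1) ^ r * q ^ (r * (3 * r + 1) / 2))
      = (∏ j ∈ Finset.range n, (1 - q ^ (2 * j + 1))) * RSip (q ^ 2) ((2 * n : ℕ) : ℤ) := by
    intro n
    induction n with
    | zero => simp [RST_zero, RSip_zero]
    | succ n ih =>
      have h1 := RS_pent2 q hq0 hq n
      rw [step n ih, show (n : ℤ) + (n + 1) + 1 = ((2 * n + 1 : ℕ) : ℤ) + 1 by push_cast; ring] at h1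
      have := RS_cancel _ hQ _ _ _ h1
      push_cast at this ⊢
      rw [this]
      congr 2
  exact step n (main n)

lemma RS_jac1 (q : K) (hq0 : q ≠ 0) (hq : ∀ j : ℕ, q ^ (j + 1) ≠ 1) (n : ℕ) :
    (1 - (q ^ 7) ^ ((n : ℤ) + n + 1)) *
      RST (q ^ 7) n (n + 1) (fun r => (-1) ^ r * q ^ (r * (7 * r + 5) / 2))
      = (1 - q ^ (7 * n + 1)) *
        RST (q ^ 7) n n (fun r => (-1) ^ r * q ^ (r * (7 * r + 5) / 2)) := by
  have hQ0 : q ^ 7 ≠ 0 := pow_ne_zero _ hq0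
  rw [RST_pascal1 (q ^ 7) hQ0 (RS_pow_ne q hq 7 (by norm_num))]
  have e : RST (q ^ 7) n n (fun s : ℤ => (-1) ^ (s - 1) * q ^ ((s - 1) * (7 * (s - 1) + 5) / 2)
      * (q ^ 7) ^ s)
      = (-q) * RST (q ^ 7) n n (fun r => (-1) ^ r * q ^ (r * (7 * r + 5) / 2)) := by
    rw [← RST_smul]
    congr 1
    funext s
    have h1 := RS_e7 (s - 1)
    have h2 := RS_e7 s
    have h3 : ((s - 1) * (7 * (s - 1) + 5) / 2) + 7 * s = 1 + (s * (7 * s + 5) / 2) := by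
      linarith
    have h4 : (q ^ 7) ^ s = q ^ (7 * s) := by
      rw [zpow_mul]; norm_cast
    rw [h4, mul_assoc, ← zpow_add₀ hq0, h3, zpow_add₀ hq0, zpow_one, RS_s1]
    ring
  rw [e, zpow_natCast]
  ring

lemma RS_jac2 (q : K) (hq0 : q ≠ 0) (hq : ∀ j : ℕ, q ^ (j + 1) ≠ 1) (n : ℕ) :
    (1 - (q ^ 7) ^ ((n : ℤ) + (n + 1) + 1)) *
      RST (q ^ 7) (n + 1) (n + 1) (fun r => (-1) ^ r * q ^ (r * (7 * r + 5) / 2))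
      = (1 - q ^ (7 * n + 6)) *
        RST (q ^ 7) n (n + 1) (fun r => (-1) ^ r * q ^ (r * (7 * r + 5) / 2)) := by
  have hQ0 : q ^ 7 ≠ 0 := pow_ne_zero _ hq0
  rw [RST_pascal2 (q ^ 7) hQ0 (RS_pow_ne q hq 7 (by norm_num))]
  have e : RST (q ^ 7) n (n + 1) (fun s : ℤ => (-1) ^ (s + 1) *
      q ^ ((s + 1) * (7 * (s + 1) + 5) / 2) * (q ^ 7) ^ (-s))
      = (-q ^ 6) * RST (q ^ 7) n (n + 1) (fun r => (-1) ^ r * q ^ (r * (7 * r + 5) / 2)) := by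
    rw [← RST_smul]
    congr 1
    funext s
    have h1 := RS_e7 (s + 1)
    have h2 := RS_e7 s
    have h3 : ((s + 1) * (7 * (s + 1) + 5) / 2) + 7 * (-s) = (6 : ℕ) + (s * (7 * s + 5) / 2) := by
      push_cast
      linarith
    have h4 : (q ^ 7) ^ (-s) = q ^ (7 * (-s)) := by
      rw [zpow_mul]; norm_cast
    rw [h4, mul_assoc, ← zpow_add₀ hq0, h3, zpow_add₀ hq0, zpow_natCast, RS_s2]
    ring
  rw [e, zpow_natCast]
  ring

lemma RS_jac (q : K) (hq0 : q ≠ 0) (hq : ∀ j : ℕ, q ^ (j + 1) ≠ 1) (n : ℕ) :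
    RST (q ^ 7) n (n + 1) (fun r => (-1) ^ r * q ^ (r * (7 * r + 5) / 2))
      = (1 - q ^ (7 * n + 1)) * (∏ j ∈ Finset.range n, (1 - q ^ (7 * j + 1)) * (1 - q ^ (7 * j + 6)))
        * RSip (q ^ 7) ((2 * n + 1 : ℕ) : ℤ) := by
  have hQ := RS_pow_ne q hq 7 (by norm_num)
  have step : ∀ n : ℕ, RST (q ^ 7) n n (fun r => (-1) ^ r * q ^ (r * (7 * r + 5) / 2))
      = (∏ j ∈ Finset.range n, (1 - q ^ (7 * j + 1)) * (1 - q ^ (7 * j + 6)))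
        * RSip (q ^ 7) ((2 * n : ℕ) : ℤ) →
    RST (q ^ 7) n (n + 1) (fun r => (-1) ^ r * q ^ (r * (7 * r + 5) / 2))
      = (1 - q ^ (7 * n + 1)) * (∏ j ∈ Finset.range n, (1 - q ^ (7 * j + 1)) * (1 - q ^ (7 * j + 6)))
        * RSip (q ^ 7) ((2 * n + 1 : ℕ) : ℤ) := by
    intro n h
    have h1 := RS_jac1 q hq0 hq n
    rw [h, ← mul_assoc] at h1
    rw [show (n : ℤ) + n + 1 = ((2 * n : ℕ) : ℤ) + 1 by push_cast; ring] at h1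
    rw [RS_cancel _ hQ _ _ _ h1]
    push_cast
    ring
  have main : ∀ n : ℕ, RST (q ^ 7) n n (fun r => (-1) ^ r * q ^ (r * (7 * r + 5) / 2))
      = (∏ j ∈ Finset.range n, (1 - q ^ (7 * j + 1)) * (1 - q ^ (7 * j + 6)))
        * RSip (q ^ 7) ((2 * n : ℕ) : ℤ) := by
    intro n
    induction n with
    | zero => simp [RST_zero, RSip_zero]
    | succ n ih =>
      have h1 := RS_jac2 q hq0 hq n
      rw [step n ih, ← mul_assoc,
        show (n : ℤ) + (n + 1) + 1 = ((2 * n + 1 : ℕ) : ℤ) + 1 by push_cast; ring] at h1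
      have := RS_cancel _ hQ _ _ _ h1
      rw [Finset.prod_range_succ]
      push_cast at this ⊢
      rw [this, show (2 : ℤ) * n + 1 + 1 = 2 * (n + 1) by ring]
      ring
  exact step n (main n)

/-- The finite Rogers–Selberg identity. -/
lemma RS_finite (q : K) (hq0 : q ≠ 0) (hq : ∀ j : ℕ, q ^ (j + 1) ≠ 1) (L : ℕ) :
    ∑ n ∈ Finset.range (L + 1), q ^ (2 * n ^ 2 + 2 * n) * RSip (q ^ 2) ((L : ℤ) - n) *
      ((∏ j ∈ Finset.range (n + 1), (1 - q ^ (2 * j + 1))) *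
        RSip (q ^ 2) ((2 * n + 1 : ℕ) : ℤ))
      = RST (q ^ 2) L (L + 1) (fun r => (-1) ^ r * q ^ (r * (7 * r + 5) / 2)) := by
  have h := RS_bailey_sum (q ^ 2) (pow_ne_zero _ hq0) (RS_pow_ne q hq 2 (by norm_num)) L
    (fun r => (-1) ^ r * q ^ (r * (3 * r + 1) / 2))
  convert h using 1
  · refine Finset.sum_congr rfl fun n _ => ?_
    rw [RS_pent q hq0 hq, show ((n : ℤ) ^ 2 + n) = ((n ^ 2 + n : ℕ) : ℤ) by push_cast; ring,
      zpow_natCast, ← pow_mul]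
    congr 3
    ring
  · congr 1
    funext r
    have h4 : (q ^ 2) ^ (r ^ 2 + r) = q ^ (2 * (r ^ 2 + r)) := by
      rw [zpow_mul]; norm_cast
    have h1 := RS_e3 r
    have h2 := RS_e7 r
    rw [h4, mul_assoc, ← zpow_add₀ hq0]
    congr 2
    linarith

end RSField2

section RSSeries

open PowerSeries

/-- finite Pochhammer product in base `X ^ d` -/
noncomputable def RSE (d k : ℕ) : ℚ⟦X⟧ := ∏ j ∈ Finset.range k, (1 - (X ^ d) ^ (j + 1))

lemma RS_cc (d j : ℕ) (hd : 0 < d) : constantCoeff (1 - ((X : ℚ⟦X⟧) ^ d) ^ (j + 1)) = 1 := by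
  simp [hd.ne']

lemma RSE_cc (d k : ℕ) (hd : 0 < d) : constantCoeff (RSE d k) = 1 := by
  unfold RSE
  rw [map_prod]
  exact Finset.prod_eq_one fun j _ => RS_cc d j hd

lemma RSE_mul_inv (d k : ℕ) (hd : 0 < d) : RSE d k * (RSE d k)⁻¹ = 1 :=
  PowerSeries.mul_inv_cancel _ (by rw [RSE_cc d k hd]; exact one_ne_zero)

/-- reciprocal Pochhammer as a power series -/
noncomputable def RSi (d : ℕ) (k : ℤ) : ℚ⟦X⟧ := if k < 0 then 0 else (RSE d k.toNat)⁻¹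

lemma RSi_mul (d : ℕ) (hd : 0 < d) (k : ℤ) (hk : 0 ≤ k) : RSE d k.toNat * RSi d k = 1 := by
  rw [RSi, if_neg (by omega), RSE_mul_inv d _ hd]

lemma RSi_map {K : Type*} [Field K] (f : ℚ⟦X⟧ →+* K) (d : ℕ) (hd : 0 < d) (k : ℤ) :
    f (RSi d k) = RSip ((f X) ^ d) k := by
  rcases lt_or_ge k 0 with h | h
  · simp [RSi, RSip, h]
  · rw [RSip, if_neg (by omega)]
    have h1 := congrArg f (RSi_mul d hd k h)
    rw [map_mul, map_one] at h1
    have h2 : f (RSE d k.toNat) = ∏ j ∈ Finset.range k.toNat, (1 - (f X ^ d) ^ (j + 1)) := by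
      simp [RSE, map_prod]
    rw [← h2]
    exact eq_inv_of_mul_eq_one_right h1

lemma RS_e7_nonneg (r : ℤ) : |r| ≤ r * (7 * r + 5) / 2 := by
  have := RS_e7 r
  rcases abs_cases r with ⟨h, h'⟩ | ⟨h, h'⟩ <;> rw [h] <;> nlinarith

lemma RS_neg_one_zpow {K : Type*} [Field K] (r : ℤ) : (-1 : K) ^ r = (-1) ^ r.natAbs := by
  rcases Int.natAbs_eq r with h | h
  · conv_lhs => rw [h]
    rw [zpow_natCast]
  · conv_lhs => rw [h]
    rw [zpow_neg, zpow_natCast, ← inv_pow]; norm_num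

/-- theta-type term -/
noncomputable def RSth (r : ℤ) : ℚ⟦X⟧ := (-1) ^ r.natAbs * X ^ (r * (7 * r + 5) / 2).toNat

lemma RSth_map {K : Type*} [Field K] (f : ℚ⟦X⟧ →+* K) (r : ℤ) :
    f (RSth r) = (-1) ^ r * (f X) ^ (r * (7 * r + 5) / 2) := by
  have h := (abs_nonneg r).trans (RS_e7_nonneg r)
  rw [RS_neg_one_zpow]
  conv_rhs => rw [← Int.toNat_of_nonneg h]
  rw [zpow_natCast]
  simp [RSth]

lemma RS_X_pow_ne (j : ℕ) : (X : ℚ⟦X⟧) ^ (j + 1) ≠ 1 := by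
  intro h
  have := congrArg constantCoeff h
  simp at this

lemma RS_series (L : ℕ) :
    ∑ n ∈ Finset.range (L + 1), X ^ (2 * n ^ 2 + 2 * n) * RSi 2 ((L : ℤ) - n) *
      ((∏ j ∈ Finset.range (n + 1), (1 - X ^ (2 * j + 1))) * RSi 2 ((2 * n + 1 : ℕ) : ℤ))
      = ∑ r ∈ Finset.Icc (-((L : ℤ) + 1)) L, RSth r * RSi 2 (L - r) * RSi 2 (L + 1 + r) := by
  have hinj := IsFractionRing.injective ℚ⟦X⟧ (FractionRing ℚ⟦X⟧)
  set f := algebraMap ℚ⟦X⟧ (FractionRing ℚ⟦X⟧) with hf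
  have : CharZero (FractionRing ℚ⟦X⟧) :=
    charZero_of_injective_ringHom (f.comp (C : ℚ →+* ℚ⟦X⟧)).injective
  have hq0 : f X ≠ 0 := by
    rw [Ne, map_eq_zero_iff f hinj]; exact X_ne_zero
  have hq : ∀ j : ℕ, (f X) ^ (j + 1) ≠ 1 := by
    intro j h
    rw [← map_pow, ← map_one f] at h
    exact RS_X_pow_ne j (hinj h)
  apply hinj
  have h := RS_finite (f X) hq0 hq L
  rw [RST_eq_sum _ _ _ L (L + 1) _ le_rfl le_rfl] at h
  rw [map_sum, map_sum]
  simp only [map_mul, map_prod, map_sub, map_one, map_pow, RSi_map f 2 (by norm_num), RSth_map f]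
  exact h

lemma RS_series_jac (L : ℕ) :
    (1 - X ^ (7 * L + 1)) *
      (∏ j ∈ Finset.range L, (1 - X ^ (7 * j + 1)) * (1 - X ^ (7 * j + 6)))
        * RSi 7 ((2 * L + 1 : ℕ) : ℤ)
      = ∑ r ∈ Finset.Icc (-((L : ℤ) + 1)) L, RSth r * RSi 7 (L - r) * RSi 7 (L + 1 + r) := by
  have hinj := IsFractionRing.injective ℚ⟦X⟧ (FractionRing ℚ⟦X⟧)
  set f := algebraMap ℚ⟦X⟧ (FractionRing ℚ⟦X⟧) with hf
  have : CharZero (FractionRing ℚ⟦X⟧) :=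
    charZero_of_injective_ringHom (f.comp (C : ℚ →+* ℚ⟦X⟧)).injective
  have hq0 : f X ≠ 0 := by
    rw [Ne, map_eq_zero_iff f hinj]; exact X_ne_zero
  have hq : ∀ j : ℕ, (f X) ^ (j + 1) ≠ 1 := by
    intro j h
    rw [← map_pow, ← map_one f] at h
    exact RS_X_pow_ne j (hinj h)
  apply hinj
  have h := RS_jac (f X) hq0 hq L
  rw [RST_eq_sum _ _ _ L (L + 1) _ le_rfl le_rfl] at h
  rw [map_sum]
  simp only [map_mul, map_prod, map_sub, map_one, map_pow, RSi_map f 7 (by norm_num), RSth_map f]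
  exact h.symm


lemma RS_phi_pow {S : Type*} [CommRing S] (φ : ℚ⟦X⟧ →+* S) (N : ℕ)
    (hφ : (φ X) ^ N = 0) (k : ℕ) (hk : N ≤ k) : (φ X) ^ k = 0 := pow_eq_zero_of_le hk hφ

lemma RS_phi_prod {S : Type*} [CommRing S] (φ : ℚ⟦X⟧ →+* S) (N : ℕ)
    (g : ℕ → ℚ⟦X⟧) (hg : ∀ j, N ≤ j → φ (g j) = 1) (k : ℕ) (hk : N ≤ k) :
    φ (∏ j ∈ Finset.range k, g j) = φ (∏ j ∈ Finset.range N, g j) := by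
  obtain ⟨t, rfl⟩ := Nat.exists_eq_add_of_le hk
  rw [Finset.prod_range_add, map_mul, map_prod φ _ (Finset.range t),
    Finset.prod_eq_one fun j _ => hg _ (by omega), mul_one]

lemma RS_phi_E {S : Type*} [CommRing S] (φ : ℚ⟦X⟧ →+* S) (N : ℕ)
    (hφ : (φ X) ^ N = 0) (d : ℕ) (hd : 0 < d) (k : ℕ) (hk : N ≤ k) : φ (RSE d k) = φ (RSE d N) := by
  apply RS_phi_prod φ N _ _ k hk
  intro j hj
  rw [map_sub, map_one, map_pow, map_pow, ← pow_mul, RS_phi_pow φ N hφ _ (by nlinarith), sub_zero]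

lemma RS_phi_i {S : Type*} [CommRing S] (φ : ℚ⟦X⟧ →+* S) (N : ℕ)
    (hφ : (φ X) ^ N = 0) (d : ℕ) (hd : 0 < d) (k : ℤ) (hk : (N : ℤ) ≤ k) :
    φ (RSi d k) = φ (RSi d N) := by
  have h1 := congrArg φ (RSi_mul d hd k (by omega))
  have h2 := congrArg φ (RSi_mul d hd N (by omega))
  rw [map_mul, RS_phi_E φ N hφ d hd k.toNat (by omega), map_one] at h1
  rw [map_mul, map_one, Int.toNat_natCast] at h2
  calc φ (RSi d k) = φ (RSi d k) * (φ (RSE d N) * φ (RSi d N)) := by rw [h2, mul_one]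
    _ = (φ (RSE d N) * φ (RSi d k)) * φ (RSi d N) := by ring
    _ = _ := by rw [h1, one_mul]

lemma RS_phi_theta {S : Type*} [CommRing S] (φ : ℚ⟦X⟧ →+* S) (N : ℕ)
    (hφ : (φ X) ^ N = 0) (d : ℕ) (hd : 0 < d) :
    φ (∑ r ∈ Finset.Icc (-(((2 * N : ℕ) : ℤ) + 1)) (2 * N : ℕ),
      RSth r * RSi d ((2 * N : ℕ) - r) * RSi d ((2 * N : ℕ) + 1 + r))
    = φ (∑ r ∈ Finset.Icc (-(((2 * N : ℕ) : ℤ) + 1)) (2 * N : ℕ), RSth r) * φ (RSi d N) ^ 2 := by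
  rw [map_sum, map_sum, Finset.sum_mul]
  refine Finset.sum_congr rfl fun r _ => ?_
  have h := RS_e7_nonneg r
  rcases lt_or_ge |r| N with hr | hr
  · rw [abs_lt] at hr
    rw [map_mul, map_mul, RS_phi_i φ N hφ d hd ((2 * N : ℕ) - r) (by push_cast; omega),
      RS_phi_i φ N hφ d hd ((2 * N : ℕ) + 1 + r) (by push_cast; omega)]
    ring
  · have : φ (RSth r) = 0 := by
      rw [RSth, map_mul, map_pow φ X, RS_phi_pow φ N hφ _ (by omega), mul_zero]
    rw [map_mul, map_mul, this]; ring

lemma RS_main {S : Type*} [CommRing S] (φ : ℚ⟦X⟧ →+* S) (N : ℕ)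
    (hφ : (φ X) ^ N = 0) :
    φ (∑ n ∈ Finset.range (2 * N + 1), X ^ (2 * n ^ 2 + 2 * n) *
      ((∏ j ∈ Finset.range (n + 1), (1 - X ^ (2 * j + 1))) * RSi 2 ((2 * n + 1 : ℕ) : ℤ)))
      * φ (RSE 2 N)
    = φ (∏ j ∈ Finset.range (2 * N), (1 - X ^ (7 * j + 1)) * (1 - X ^ (7 * j + 6))) *
      φ (RSE 7 N) := by
  have h1 := congrArg φ (RS_series (2 * N))
  have h2 := congrArg φ (RS_series_jac (2 * N))
  rw [RS_phi_theta φ N hφ _ (by norm_num)] at h1 h2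
  have u : ∀ d, 0 < d → φ (RSE d N) * φ (RSi d N) = 1 := by
    intro d hd
    have h2 := congrArg φ (RSi_mul d hd N (by omega))
    rwa [map_mul, map_one, Int.toNat_natCast] at h2
  have u2 := u 2 (by norm_num)
  have u7 := u 7 (by norm_num)
  rw [map_mul, map_mul, RS_phi_i φ N hφ 7 (by norm_num) _ (by push_cast; omega), map_sub φ 1,
    map_pow φ, RS_phi_pow φ N hφ _ (by omega), map_one, sub_zero, one_mul] at h2
  have h3 : φ (∑ n ∈ Finset.range (2 * N + 1), X ^ (2 * n ^ 2 + 2 * n) *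
        RSi 2 (((2 * N : ℕ) : ℤ) - n) *
      ((∏ j ∈ Finset.range (n + 1), (1 - X ^ (2 * j + 1))) * RSi 2 ((2 * n + 1 : ℕ) : ℤ)))
      = φ (∑ n ∈ Finset.range (2 * N + 1), X ^ (2 * n ^ 2 + 2 * n) *
      ((∏ j ∈ Finset.range (n + 1), (1 - X ^ (2 * j + 1))) * RSi 2 ((2 * n + 1 : ℕ) : ℤ)))
        * φ (RSi 2 N) := by
    rw [map_sum, map_sum, Finset.sum_mul]
    refine Finset.sum_congr rfl fun n _ => ?_
    rw [map_mul, map_mul, map_mul φ (X ^ _)]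
    rcases lt_or_ge n N with hn | hn
    · rw [RS_phi_i φ N hφ 2 (by norm_num) (((2 * N : ℕ) : ℤ) - n) (by push_cast; omega)]
      ring
    · rw [map_pow φ, RS_phi_pow φ N hφ _ (by nlinarith)]
      ring
  rw [h3] at h1
  generalize φ (∑ n ∈ Finset.range (2 * N + 1), _) = A at *
  generalize φ (∑ r ∈ Finset.Icc (-(((2 * N : ℕ) : ℤ) + 1)) (2 * N : ℕ), RSth r) = T at *
  generalize φ (∏ n ∈ _, _) = P at *
  generalize φ (RSE 2 N) = E2 at *
  generalize φ (RSE 7 N) = E7 at *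
  generalize φ (RSi 2 N) = i2 at *
  generalize φ (RSi 7 N) = i7 at *
  have a1 : A * E2 = T := by
    linear_combination (E2 ^ 2) * h1 - (A * E2 - T - T * E2 * i2) * u2
  have a2 : P * E7 = T := by
    linear_combination (E7 ^ 2) * h2 - (P * E7 - T - T * E7 * i7) * u7
  rw [a1, a2]

end RSSeries

section RSGen

open PowerSeries

/-- factor for the part `j + 1` in the generating function of the left side -/
noncomputable def RSfA (n j : ℕ) : ℚ⟦X⟧ :=
  if j + 1 ≤ 2 * n + 1 then
    (if Even (j + 1) then X ^ (2 * (j + 1)) * (1 - X ^ (j + 1))⁻¹ else 1)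
  else 1 + X ^ (j + 1)

/-- factor for the part `j + 1` in the generating function of the right side -/
noncomputable def RSfC (j : ℕ) : ℚ⟦X⟧ :=
  if (j + 1) % 7 ≠ 0 ∧ (j + 1) % 7 ≠ 1 ∧ (j + 1) % 7 ≠ 6 then (1 - X ^ (j + 1))⁻¹ else 1

lemma RS_one_sub_mul_inv (j : ℕ) : (1 - (X : ℚ⟦X⟧) ^ (j + 1)) * (1 - X ^ (j + 1))⁻¹ = 1 :=
  PowerSeries.mul_inv_cancel _ (by simp)

lemma RS_headA (n : ℕ) :
    (∏ j ∈ Finset.range (2 * n + 1),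
      (if Even (j + 1) then X ^ (2 * (j + 1)) * (1 - (X : ℚ⟦X⟧) ^ (j + 1))⁻¹ else 1)) * RSE 2 n
      = X ^ (2 * n ^ 2 + 2 * n) := by
  induction n with
  | zero => simp [RSE]
  | succ n ih =>
    rw [show 2 * (n + 1) + 1 = 2 * n + 1 + 1 + 1 by ring, Finset.prod_range_succ,
      Finset.prod_range_succ, if_pos ⟨n + 1, by ring⟩,
      if_neg (by rw [Nat.not_even_iff_odd]; exact ⟨n + 1, by ring⟩)]
    have h := RS_one_sub_mul_inv (2 * n + 1)
    have h2 : RSE 2 (n + 1) = RSE 2 n * (1 - X ^ (2 * n + 1 + 1)) := by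
      rw [RSE, Finset.prod_range_succ, ← pow_mul, RSE]; rfl
    rw [h2]
    generalize (1 - (X : ℚ⟦X⟧) ^ (2 * n + 1 + 1))⁻¹ = v at *
    generalize (1 - (X : ℚ⟦X⟧) ^ (2 * n + 1 + 1)) = u at *
    rw [show 2 * (n + 1) ^ 2 + 2 * (n + 1) = (2 * n ^ 2 + 2 * n) + 2 * (2 * n + 1 + 1) by ring,
      pow_add, ← ih]
    linear_combination (∏ j ∈ Finset.range (2 * n + 1),
      (if Even (j + 1) then X ^ (2 * (j + 1)) * (1 - (X : ℚ⟦X⟧) ^ (j + 1))⁻¹ else 1)) * RSE 2 n *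
      X ^ (2 * (2 * n + 1 + 1)) * h

lemma RS_E_split (n : ℕ) : RSE 2 (2 * n + 1)
    = (∏ j ∈ Finset.range (n + 1), (1 - X ^ (2 * j + 1))) * RSE 2 n *
      ∏ j ∈ Finset.range (2 * n + 1), (1 + X ^ (j + 1)) := by
  induction n with
  | zero => simp [RSE]; ring
  | succ n ih =>
    have h2 : ∀ n, RSE 2 (n + 1) = RSE 2 n * (1 - X ^ (2 * (n + 1))) := by
      intro n
      rw [RSE, Finset.prod_range_succ, ← pow_mul, RSE]
    rw [show 2 * (n + 1) + 1 = 2 * n + 1 + 1 + 1 by ring, h2, h2, ih, h2 n,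
      Finset.prod_range_succ _ (n + 1), Finset.prod_range_succ _ (2 * n + 1 + 1),
      Finset.prod_range_succ _ (2 * n + 1)]
    ring

lemma RS_A_term (n M : ℕ) (h : 2 * n + 1 ≤ M) :
    ∏ j ∈ Finset.range M, RSfA n j = X ^ (2 * n ^ 2 + 2 * n) *
      ((∏ j ∈ Finset.range (n + 1), (1 - X ^ (2 * j + 1))) * RSi 2 ((2 * n + 1 : ℕ) : ℤ)) *
      ∏ j ∈ Finset.range M, (1 + X ^ (j + 1)) := by
  obtain ⟨t, rfl⟩ := Nat.exists_eq_add_of_le h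
  rw [Finset.prod_range_add _ (2 * n + 1) t, Finset.prod_range_add _ (2 * n + 1) t]
  have e1 : ∏ j ∈ Finset.range (2 * n + 1), RSfA n j = ∏ j ∈ Finset.range (2 * n + 1),
      (if Even (j + 1) then X ^ (2 * (j + 1)) * (1 - (X : ℚ⟦X⟧) ^ (j + 1))⁻¹ else 1) := by
    refine Finset.prod_congr rfl fun j hj => ?_
    rw [Finset.mem_range] at hj
    rw [RSfA, if_pos (by omega)]
  have e2 : ∏ j ∈ Finset.range t, RSfA n (2 * n + 1 + j)
      = ∏ j ∈ Finset.range t, (1 + X ^ (2 * n + 1 + j + 1)) := by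
    refine Finset.prod_congr rfl fun j hj => ?_
    rw [RSfA, if_neg (by omega)]
  have hE : RSE 2 n ≠ 0 := by
    intro h
    have := RSE_cc 2 n (by norm_num)
    rw [h] at this
    simp at this
  apply mul_right_cancel₀ hE
  have h1 := RS_headA n
  have h2 := RSi_mul 2 (by norm_num) ((2 * n + 1 : ℕ) : ℤ) (by omega)
  rw [Int.toNat_natCast, RS_E_split] at h2
  rw [← e1] at h1
  rw [e2]
  generalize ∏ j ∈ Finset.range t, (1 + (X : ℚ⟦X⟧) ^ (2 * n + 1 + j + 1)) = Z at *
  linear_combination Z * h1 - X ^ (2 * n ^ 2 + 2 * n) * Z * h2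

lemma RS_seven (g : ℕ → ℚ⟦X⟧)
    (hg : ∀ j, g j = if (j + 1) % 7 ≠ 0 ∧ (j + 1) % 7 ≠ 1 ∧ (j + 1) % 7 ≠ 6 then 1
      else (1 - X ^ (j + 1))) (k : ℕ) :
    ∏ j ∈ Finset.range (7 * k), g j
      = (∏ j ∈ Finset.range k, (1 - X ^ (7 * j + 1)) * (1 - X ^ (7 * j + 6))) * RSE 7 k := by
  induction k with
  | zero => simp [RSE]
  | succ k ih =>
    have h2 : RSE 7 (k + 1) = RSE 7 k * (1 - X ^ (7 * (k + 1))) := by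
      rw [RSE, Finset.prod_range_succ, ← pow_mul, RSE]
    rw [show 7 * (k + 1) = 7 * k + 1 + 1 + 1 + 1 + 1 + 1 + 1 by ring, Finset.prod_range_succ,
      Finset.prod_range_succ, Finset.prod_range_succ, Finset.prod_range_succ,
      Finset.prod_range_succ, Finset.prod_range_succ, Finset.prod_range_succ, ih, h2,
      Finset.prod_range_succ, hg (7 * k), hg (7 * k + 1), hg (7 * k + 1 + 1),
      hg (7 * k + 1 + 1 + 1), hg (7 * k + 1 + 1 + 1 + 1), hg (7 * k + 1 + 1 + 1 + 1 + 1),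
      hg (7 * k + 1 + 1 + 1 + 1 + 1 + 1)]
    rw [if_neg (by omega), if_pos (by omega), if_pos (by omega), if_pos (by omega),
      if_pos (by omega), if_neg (by omega), if_neg (by omega)]
    ring

lemma RS_phi_final {S : Type*} [CommRing S] (φ : ℚ⟦X⟧ →+* S) (N : ℕ)
    (hφ : (φ X) ^ N = 0) :
    φ (∑ n ∈ Finset.range (2 * N + 1), ∏ j ∈ Finset.range (4 * N + 1), RSfA n j)
      = φ (∏ j ∈ Finset.range (4 * N + 1), RSfC j) := by
  have hA : ∑ n ∈ Finset.range (2 * N + 1), ∏ j ∈ Finset.range (4 * N + 1), RSfA n j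
      = (∑ n ∈ Finset.range (2 * N + 1), X ^ (2 * n ^ 2 + 2 * n) *
      ((∏ j ∈ Finset.range (n + 1), (1 - X ^ (2 * j + 1))) * RSi 2 ((2 * n + 1 : ℕ) : ℤ))) *
      ∏ j ∈ Finset.range (4 * N + 1), (1 + X ^ (j + 1)) := by
    rw [Finset.sum_mul]
    refine Finset.sum_congr rfl fun n hn => ?_
    rw [Finset.mem_range] at hn
    exact RS_A_term n _ (by omega)
  have hm := RS_main φ N hφ
  set g : ℕ → ℚ⟦X⟧ := fun j => if (j + 1) % 7 ≠ 0 ∧ (j + 1) % 7 ≠ 1 ∧ (j + 1) % 7 ≠ 6 then 1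
      else (1 - X ^ (j + 1)) with hg
  have hgN : ∀ j, N ≤ j → φ (g j) = 1 := by
    intro j hj
    simp only [hg]
    split_ifs
    · exact map_one φ
    · rw [map_sub, map_one, map_pow, RS_phi_pow φ N hφ _ (by omega), sub_zero]
  have h7 := congrArg φ (RS_seven g (fun j => rfl) (2 * N))
  rw [RS_phi_prod φ N g hgN _ (by omega), ← RS_phi_prod φ N g hgN (4 * N + 1) (by omega),
    map_mul, RS_phi_E φ N hφ 7 (by norm_num) _ (by omega)] at h7
  have hC : (∏ j ∈ Finset.range (4 * N + 1), RSfC j) * RSE 1 (4 * N + 1)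
      = ∏ j ∈ Finset.range (4 * N + 1), g j := by
    rw [RSE, ← Finset.prod_mul_distrib]
    refine Finset.prod_congr rfl fun j _ => ?_
    rw [pow_one]
    simp only [hg, RSfC]
    split_ifs
    · rw [mul_comm]; exact RS_one_sub_mul_inv j
    · rw [one_mul]
  have hE : RSE 1 (4 * N + 1) * ∏ j ∈ Finset.range (4 * N + 1), (1 + X ^ (j + 1))
      = RSE 2 (4 * N + 1) := by
    rw [RSE, RSE, ← Finset.prod_mul_distrib]
    refine Finset.prod_congr rfl fun j _ => ?_
    ring
  have hE' := congrArg φ hE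
  rw [RS_phi_E φ N hφ 2 (by norm_num) _ (by omega), map_mul] at hE'
  have hC' := congrArg φ hC
  rw [h7, ← hm, map_mul, ← hE'] at hC'
  have hu := congrArg φ (RSE_mul_inv 1 (4 * N + 1) (by norm_num))
  rw [map_mul, map_one] at hu
  rw [hA, map_mul]
  linear_combination (-φ (RSE 1 (4 * N + 1))⁻¹) * hC' + (φ (∏ j ∈ Finset.range (4 * N + 1), RSfC j)
    - φ (∑ n ∈ Finset.range (2 * N + 1), X ^ (2 * n ^ 2 + 2 * n) *
      ((∏ j ∈ Finset.range (n + 1), (1 - X ^ (2 * j + 1))) * RSi 2 ((2 * n + 1 : ℕ) : ℤ))) *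
      φ (∏ j ∈ Finset.range (4 * N + 1), (1 + X ^ (j + 1)))) * hu

lemma RS_coeff (N n : ℕ) (hn : n < N) :
    coeff n (∑ m ∈ Finset.range (2 * N + 1), ∏ j ∈ Finset.range (4 * N + 1), RSfA m j)
      = coeff n (∏ j ∈ Finset.range (4 * N + 1), RSfC j) := by
  have h := RS_phi_final (Ideal.Quotient.mk (Ideal.span {(X : ℚ⟦X⟧) ^ N})) N (by
    rw [← map_pow, Ideal.Quotient.eq_zero_iff_mem]
    exact Ideal.mem_span_singleton_self _)
  rw [Ideal.Quotient.eq, Ideal.mem_span_singleton, X_pow_dvd_iff] at h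
  have := h n hn
  rwa [map_sub, sub_eq_zero] at this

end RSGen

section RSPart

open PowerSeries Finset

open scoped Classical in
/-- series of a part `j` with admissible multiplicities `a` -/
noncomputable def RSser (a : ℕ → Prop) (j : ℕ) : ℚ⟦X⟧ :=
  PowerSeries.mk fun k => if j ∣ k ∧ a (k / j) then 1 else 0

lemma RSser_all (j : ℕ) : RSser (fun _ => True) (j + 1) = (1 - X ^ (j + 1))⁻¹ := by
  rw [PowerSeries.eq_inv_iff_mul_eq_one (by simp)]
  ext k
  rw [mul_sub, mul_one, map_sub, coeff_mul_X_pow', RSser, coeff_mk, coeff_one]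
  simp only [and_true, coeff_mk]
  by_cases hk : j + 1 ≤ k
  · rw [if_pos hk, if_neg (by omega : ¬ k = 0)]
    obtain ⟨t, rfl⟩ := Nat.exists_eq_add_of_le hk
    rw [Nat.add_sub_cancel_left]
    simp only [Nat.dvd_add_self_left, sub_self]
  · rw [if_neg hk]
    by_cases h0 : k = 0
    · simp [h0]
    · rw [if_neg (fun h => hk (Nat.le_of_dvd (by omega) h)), if_neg h0, sub_zero]

lemma RSser_zero (j : ℕ) : RSser (fun c => c = 0) (j + 1) = 1 := by
  ext k
  rw [RSser, coeff_mk, coeff_one]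
  congr 1
  apply propext
  constructor
  · rintro ⟨⟨c, rfl⟩, h⟩
    rw [Nat.mul_div_cancel_left _ (by omega)] at h
    simp [h]
  · rintro rfl; simp

lemma RSser_le_one (j : ℕ) : RSser (fun c => c ≤ 1) (j + 1) = 1 + X ^ (j + 1) := by
  ext k
  rw [RSser, coeff_mk, map_add, coeff_one, coeff_X_pow]
  by_cases h : (j + 1) ∣ k
  · obtain ⟨c, rfl⟩ := h
    rw [Nat.mul_div_cancel_left _ (by omega)]
    rcases c with _ | _ | c
    · simp
    · simp
    · have h1 : ¬ ((j + 1) * (c + 1 + 1) = j + 1) := by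
        intro h; nlinarith
      simp [h1]
  · have h0 : k ≠ 0 := by rintro rfl; simp at h
    have h1 : k ≠ j + 1 := by rintro rfl; simp at h
    simp [h, h0, h1]

lemma RSser_two_le (j : ℕ) :
    RSser (fun c => 2 ≤ c) (j + 1) = X ^ (2 * (j + 1)) * (1 - X ^ (j + 1))⁻¹ := by
  rw [← RSser_all]
  ext k
  rw [coeff_X_pow_mul', RSser, RSser, coeff_mk]
  simp only [coeff_mk, and_true]
  by_cases h : (j + 1) ∣ k
  · obtain ⟨c, rfl⟩ := h
    rw [Nat.mul_div_cancel_left _ (by omega), mul_comm 2 (j + 1), ← Nat.mul_sub]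
    have : (j + 1) * 2 ≤ (j + 1) * c ↔ 2 ≤ c := Nat.mul_le_mul_left_iff (by omega)
    simp only [this, dvd_mul_right, true_and, if_true]
  · rw [if_neg (fun h' => h h'.1)]
    by_cases h2 : 2 * (j + 1) ≤ k
    · rw [if_pos h2, if_neg]
      intro h3
      apply h
      have := (Nat.dvd_add_right h3).mpr (dvd_mul_left (j + 1) 2)
      rwa [Nat.sub_add_cancel h2] at this
    · rw [if_neg h2]

lemma RS_count (a : ℕ → ℕ → Prop) (n M : ℕ) (hM : n ≤ M)
    [DecidablePred fun π : n.Partition => ∀ j ∈ Finset.Icc 1 M, a j (π.parts.count j)] :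
    ((Finset.univ.filter fun π : n.Partition =>
        ∀ j ∈ Finset.Icc 1 M, a j (π.parts.count j)).card : ℚ)
      = coeff n (∏ j ∈ Finset.range M, RSser (a (j + 1)) (j + 1)) := by
  classical
  have e : ∏ j ∈ Finset.range M, RSser (a (j + 1)) (j + 1)
      = ∏ j ∈ Finset.Icc 1 M, RSser (a j) j := by
    rw [Finset.range_eq_Ico, Finset.prod_Ico_add' (fun j => RSser (a j) j) 0 M 1]
    rfl
  rw [e, coeff_prod]
  have e2 : ∀ l ∈ finsuppAntidiag (Finset.Icc 1 M) n,
      ∏ i ∈ Finset.Icc 1 M, coeff (l i) (RSser (a i) i)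
      = if (∀ i ∈ Finset.Icc 1 M, i ∣ l i ∧ a i (l i / i)) then 1 else 0 := by
    intro l _
    simp only [RSser, coeff_mk]
    rw [Finset.prod_ite_zero]
    simp
  rw [Finset.sum_congr rfl e2, Finset.sum_boole]
  congr 1
  refine Finset.card_bij (fun π _ => π.toFinsuppAntidiag) ?_ ?_ ?_
  · intro π hπ
    rw [Finset.mem_filter] at hπ ⊢
    refine ⟨finsuppAntidiag_mono (Finset.Icc_subset_Icc_right hM) _
      π.toFinsuppAntidiag_mem_finsuppAntidiag, fun i hi => ?_⟩
    have h1 : π.toFinsuppAntidiag i = π.parts.count i * i := rfl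
    rw [h1, Nat.mul_div_cancel _ (by rw [Finset.mem_Icc] at hi; omega)]
    exact ⟨dvd_mul_left _ _, hπ.2 i hi⟩
  · intro π _ π' _ h
    exact Nat.Partition.toFinsuppAntidiag_injective n h
  · intro g hg
    rw [Finset.mem_filter, mem_finsuppAntidiag] at hg
    obtain ⟨⟨hsum, hsupp⟩, hg⟩ := hg
    have hdvd : ∀ i, i ∣ g i := by
      intro i
      by_cases hi : i ∈ Finset.Icc 1 M
      · exact (hg i hi).1
      · have : g i = 0 := by
          by_contra h
          exact hi (hsupp (by simpa using h))
        simp [this]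
    have hpos : ∀ i, g i ≠ 0 → 1 ≤ i := by
      intro i h
      have := hsupp (show i ∈ g.support by simpa using h)
      rw [Finset.mem_Icc] at this
      exact this.1
    let π : n.Partition := 
      { parts := (Finsupp.mk g.support (fun i ↦ g i / i) (by
          intro i
          rw [Finsupp.mem_support_iff]
          constructor
          · intro h
            have h1 := hpos i h
            have := Nat.le_of_dvd (Nat.pos_of_ne_zero h) (hdvd i)
            exact (Nat.div_pos this h1).ne'
          · intro h h'
            rw [h'] at h; simp at h)).toMultiset
        parts_pos := by
          intro i hi
          rw [Finsupp.mem_toMultiset] at hi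
          exact hpos i (by simpa using hi)
        parts_sum := by
          refine Eq.trans ?_ hsum
          suffices ∑ x ∈ g.support, g x / x * x = ∑ x ∈ Finset.Icc 1 M, g x by
            simpa [Finsupp.sum]
          apply sum_subset_zero_on_sdiff hsupp (by simp)
          exact fun x hx ↦ Nat.div_mul_cancel (hdvd x) }
    have hc : ∀ i, π.parts.count i = g i / i := by
      intro i
      simp only [π, Finsupp.count_toMultiset]
      rfl
    refine ⟨π, ?_, ?_⟩
    · rw [Finset.mem_filter]
      refine ⟨Finset.mem_univ _, fun i hi => ?_⟩
      rw [hc]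
      exact (hg i hi).2
    · ext i
      show π.parts.count i * i = g i
      rw [hc, Nat.div_mul_cancel (hdvd i)]

/-- admissible multiplicities on the left, when the largest repeated part is `2 * m` -/
def RSa (m j c : ℕ) : Prop :=
  if j ≤ 2 * m + 1 then (if Even j then 2 ≤ c else c = 0) else c ≤ 1

lemma RSser_A (m j : ℕ) : RSser (RSa m (j + 1)) (j + 1) = RSfA m j := by
  unfold RSfA
  by_cases h : j + 1 ≤ 2 * m + 1
  · rw [if_pos h]
    by_cases h2 : Even (j + 1)
    · rw [if_pos h2, ← RSser_two_le]
      congr 1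
      funext c
      simp only [RSa, if_pos h, if_pos h2]
    · rw [if_neg h2, ← RSser_zero j]
      congr 1
      funext c
      simp only [RSa, if_pos h, if_neg h2]
  · rw [if_neg h, ← RSser_le_one]
    congr 1
    funext c
    simp only [RSa, if_neg h]

lemma RSser_C (j : ℕ) : RSser (fun c => c ≠ 0 →
      (j + 1) % 7 ≠ 0 ∧ (j + 1) % 7 ≠ 1 ∧ (j + 1) % 7 ≠ 6) (j + 1) = RSfC j := by
  unfold RSfC
  split_ifs with h
  · rw [← RSser_all]
    congr 1
    funext c
    simp [h]
  · rw [← RSser_zero j]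
    congr 1
    funext c
    apply propext
    constructor
    · intro hc; by_contra h0; exact h (hc h0)
    · intro h0 h1; exact absurd h0 h1

lemma RS_le_largest {n : ℕ} (π : n.Partition) (j : ℕ) (h : 2 ≤ π.parts.count j) :
    j ≤ largestRepeatedPart π := by
  unfold largestRepeatedPart
  apply Finset.le_sup (f := id)
  rw [Finset.mem_filter, Multiset.mem_toFinset]
  exact ⟨Multiset.count_pos.mp (by omega), h⟩

lemma RS_largest_le {n : ℕ} (π : n.Partition) (k : ℕ) (h : ∀ j, 2 ≤ π.parts.count j → j ≤ k) :
    largestRepeatedPart π ≤ k := by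
  unfold largestRepeatedPart
  apply Finset.sup_le
  intro j hj
  rw [Finset.mem_filter] at hj
  exact h j hj.2

lemma RS_largest_count {n : ℕ} (π : n.Partition) (h : largestRepeatedPart π ≠ 0) :
    2 ≤ π.parts.count (largestRepeatedPart π) := by
  by_contra hc
  have : largestRepeatedPart π ≤ largestRepeatedPart π - 1 := by
    apply RS_largest_le
    intro j hj
    have h1 := RS_le_largest π j hj
    rcases h1.lt_or_eq with h2 | h2
    · omega
    · rw [h2] at hj; exact absurd hj hc
  omega

lemma RS_count_zero {n : ℕ} (π : n.Partition) : π.parts.count 0 = 0 :=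
  Multiset.count_eq_zero.mpr (fun h => absurd (π.parts_pos h) (lt_irrefl 0))

lemma RS_count_big {n : ℕ} (π : n.Partition) (j : ℕ) (h : n < j) : π.parts.count j = 0 := by
  rw [Multiset.count_eq_zero]
  intro hj
  have := Multiset.le_sum_of_mem hj
  rw [π.parts_sum] at this
  omega

lemma RS_cond {n : ℕ} (π : n.Partition) (m M : ℕ) (hM : n ≤ M) (hm : 2 * m + 1 ≤ M) :
    (((∀ j, Odd j → π.parts.count j ≤ 1) ∧
        (∀ j, Odd j → j < largestRepeatedPart π + 2 → π.parts.count j = 0) ∧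
        (∀ j, Even j → 0 < j → j < largestRepeatedPart π → 2 ≤ π.parts.count j)) ∧
      largestRepeatedPart π / 2 = m) ↔ ∀ j ∈ Finset.Icc 1 M, RSa m j (π.parts.count j) := by
  constructor
  · rintro ⟨⟨h1, h2, h3⟩, rfl⟩ j hj
    rw [Finset.mem_Icc] at hj
    have hev : Even (largestRepeatedPart π) := by
      by_contra ho
      rw [Nat.not_even_iff_odd] at ho
      have h4 := h1 _ ho
      have h5 := RS_largest_count π (by rintro h0; rw [h0] at ho; simp at ho)
      omega
    have hR : 2 * (largestRepeatedPart π / 2) = largestRepeatedPart π :=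
      Nat.two_mul_div_two_of_even hev
    unfold RSa
    rw [hR]
    split_ifs with c1 c2
    · rcases Nat.lt_or_ge j (largestRepeatedPart π) with h | h
      · exact h3 j c2 (by omega) h
      · have : j = largestRepeatedPart π := by
          rcases c2 with ⟨x, hx⟩; rcases hev with ⟨y, hy⟩; omega
        rw [this]
        exact RS_largest_count π (by omega)
    · rw [Nat.not_even_iff_odd] at c2
      exact h2 j c2 (by omega)
    · by_contra hc
      have := RS_le_largest π j (by omega)
      omega
  · intro h
    have hle : largestRepeatedPart π ≤ 2 * m := by
      apply RS_largest_le
      intro j hj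
      by_contra hjm
      have hj1 : j ≤ M := by
        by_contra hjM
        rw [RS_count_big π j (by omega)] at hj; omega
      have h' := h j (Finset.mem_Icc.mpr ⟨by omega, hj1⟩)
      unfold RSa at h'
      split_ifs at h' with c1 c2
      · rcases c2 with ⟨x, hx⟩; omega
      · omega
      · omega
    have hge : 2 * m ≤ largestRepeatedPart π := by
      rcases Nat.eq_zero_or_pos m with h0 | h0
      · omega
      · apply RS_le_largest
        have h' := h (2 * m) (Finset.mem_Icc.mpr ⟨by omega, by omega⟩)
        unfold RSa at h'
        rwa [if_pos (by omega), if_pos (even_two_mul m)] at h'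
    have hR : largestRepeatedPart π = 2 * m := le_antisymm hle hge
    rw [hR]
    have hodd : ∀ j, Odd j → j < 2 * m + 2 → π.parts.count j = 0 := by
      intro j hj hjm
      have h' := h j (Finset.mem_Icc.mpr ⟨hj.pos, by omega⟩)
      unfold RSa at h'
      rwa [if_pos (by omega), if_neg (Nat.not_even_iff_odd.mpr hj)] at h'
    refine ⟨⟨?_, hodd, ?_⟩, by omega⟩
    · intro j hj
      rcases Nat.lt_or_ge j (2 * m + 2) with hjm | hjm
      · rw [hodd j hj hjm]; omega
      · by_contra hc
        have := RS_le_largest π j (by omega)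
        omega
    · intro j hj h0 hjm
      have h' := h j (Finset.mem_Icc.mpr ⟨by omega, by omega⟩)
      unfold RSa at h'
      rwa [if_pos (by omega), if_pos hj] at h'

lemma RS_largest_le_n {n : ℕ} (π : n.Partition) : largestRepeatedPart π ≤ n := by
  apply RS_largest_le
  intro j hj
  by_contra h
  rw [RS_count_big π j (by omega)] at hj
  omega

end RSPart


/-- Interpretation of the first Rogers–Selberg identity: `A₁(n) = C_{3,1}(n)`.
A partition is counted by `A₁(n)` iff every odd part appears at most once, no odd part less than
(largest repeated part) + 2 appears, and every positive even integer less than the largest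
repeated part appears at least twice (no part greater than the largest repeated part being
repeated, by definition). -/
theorem A1_eq_C31 (n : ℕ) :
    Nat.card {π : n.Partition //
        (∀ j, Odd j → π.parts.count j ≤ 1) ∧
        (∀ j, Odd j → j < largestRepeatedPart π + 2 → π.parts.count j = 0) ∧
        (∀ j, Even j → 0 < j → j < largestRepeatedPart π → 2 ≤ π.parts.count j)} =
      Nat.card {π : n.Partition //
        ∀ j ∈ π.parts, j % 7 ≠ 0 ∧ j % 7 ≠ 1 ∧ j % 7 ≠ 6} := by
  classical
  rw [Nat.card_eq_fintype_card, Nat.card_eq_fintype_card, Fintype.card_subtype,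
    Fintype.card_subtype]
  have key := RS_coeff (n + 1) n (Nat.lt_succ_self n)
  have hC : ((Finset.univ.filter fun π : n.Partition =>
      ∀ j ∈ π.parts, j % 7 ≠ 0 ∧ j % 7 ≠ 1 ∧ j % 7 ≠ 6).card : ℚ)
      = PowerSeries.coeff n (∏ j ∈ Finset.range (4 * (n + 1) + 1), RSfC j) := by
    have h := RS_count (fun j c => c ≠ 0 → j % 7 ≠ 0 ∧ j % 7 ≠ 1 ∧ j % 7 ≠ 6) n
      (4 * (n + 1) + 1) (by omega)
    simp only [RSser_C] at h
    rw [← h]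
    congr 2
    ext π
    simp only [Finset.mem_filter, Finset.mem_univ, true_and]
    constructor
    · intro h j _ hc
      exact h j (Multiset.count_ne_zero.mp hc)
    · intro h j hj
      have hj1 : j ≤ n := by
        by_contra hh
        exact (Multiset.count_ne_zero.mpr hj) (RS_count_big π j (by omega))
      exact h j (Finset.mem_Icc.mpr ⟨π.parts_pos hj, by omega⟩) (Multiset.count_ne_zero.mpr hj)
  have hA : ((Finset.univ.filter fun π : n.Partition =>
        (∀ j, Odd j → π.parts.count j ≤ 1) ∧
        (∀ j, Odd j → j < largestRepeatedPart π + 2 → π.parts.count j = 0) ∧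
        (∀ j, Even j → 0 < j → j < largestRepeatedPart π → 2 ≤ π.parts.count j)).card : ℚ)
      = PowerSeries.coeff n (∑ m ∈ Finset.range (2 * (n + 1) + 1),
        ∏ j ∈ Finset.range (4 * (n + 1) + 1), RSfA m j) := by
    rw [Finset.card_eq_sum_card_fiberwise (f := fun π => largestRepeatedPart π / 2)
      (t := Finset.range (2 * (n + 1) + 1)), map_sum, Nat.cast_sum]
    · refine Finset.sum_congr rfl fun m hm => ?_
      rw [Finset.mem_range] at hm
      have h := RS_count (RSa m) n (4 * (n + 1) + 1) (by omega)
      simp only [RSser_A] at h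
      rw [← h, Finset.filter_filter]
      congr 2
      ext π
      simp only [Finset.mem_filter, Finset.mem_univ, true_and]
      exact RS_cond π m _ (by omega) (by omega)
    · intro π _
      have := RS_largest_le_n π
      simp only [Finset.coe_range, Set.mem_Iio]
      omega
  have : ((Finset.univ.filter fun π : n.Partition =>
        (∀ j, Odd j → π.parts.count j ≤ 1) ∧
        (∀ j, Odd j → j < largestRepeatedPart π + 2 → π.parts.count j = 0) ∧
        (∀ j, Even j → 0 < j → j < largestRepeatedPart π → 2 ≤ π.parts.count j)).card : ℚ)
      = ((Finset.univ.filter fun π : n.Partition =>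
      ∀ j ∈ π.parts, j % 7 ≠ 0 ∧ j % 7 ≠ 1 ∧ j % 7 ≠ 6).card : ℚ) := by
    rw [hA, hC, key]
  exact_mod_cast this
end
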